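/- arXiv:1109.3676 — 6 statements merged into one kernel-verified Lean document; each statement's English description precedes it below -/
import Mathlib

section
/- For every t > 0 one has μ(t) ≤ (1 − 2e^{−1})^{−1} t^{−2} φ'(t^{−1}); that is, the decreasing Lévy density of a subordinator is always bounded above by the expression t^{−2}φ'(t^{−1}) up to the universal constant (1 − 2/e)^{−1}. -/
open MeasureTheory Set Filter Topology

/-- Upper bound for the decreasing Lévy density of a subordinator:
`μ(t) ≤ (1 - 2/e)⁻¹ t⁻² φ'(t⁻¹)` for every `t > 0`. -/
theorem levy_density_upper_bound
    (μ φ φ' : ℝ → ℝ)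
    (hμpos : ∀ t, 0 < t → 0 < μ t)
    (hμdec : ∀ s t, 0 < s → s ≤ t → μ t ≤ μ s)
    (hμint : IntegrableOn (fun t => min 1 t * μ t) (Ioi 0))
    (hφ : ∀ l, 0 < l → φ l = ∫ t in Ioi (0:ℝ), (1 - Real.exp (-(l * t))) * μ t)
    (hφ' : ∀ l, 0 < l → φ' l = ∫ t in Ioi (0:ℝ), t * Real.exp (-(l * t)) * μ t) :
    ∀ t, 0 < t → μ t ≤ (1 - 2 * Real.exp (-1))⁻¹ * (t ^ (-2 : ℝ) * φ' t⁻¹) := by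
  intro t ht
  have hl : 0 < t⁻¹ := inv_pos.mpr ht
  have hint : IntegrableOn (fun s => s * Real.exp (-(t⁻¹ * s)) * μ s) (Ioi 0) := by
    have h1 : IntegrableOn (fun s => (s * Real.exp (-(t⁻¹ * s)) / min 1 s) * (min 1 s * μ s))
        (Ioi 0) := by
      refine Integrable.bdd_mul (c := 1 + t) hμint ?_ ?_
      · apply Measurable.aestronglyMeasurable
        fun_prop
      · filter_upwards [ae_restrict_mem measurableSet_Ioi] with s hs
        have hs : 0 < s := hs
        have hm : 0 < min 1 s := lt_min one_pos hs
        have he := Real.exp_pos (-(t⁻¹ * s))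
        rw [Real.norm_of_nonneg (by positivity), div_le_iff₀ hm]
        have h2 : Real.exp (-(t⁻¹ * s)) ≤ 1 := Real.exp_le_one_iff.mpr (by
          have := mul_pos hl hs
          linarith)
        rcases le_total 1 s with h | h
        · rw [min_eq_left h]
          have h3 := Real.add_one_le_exp (t⁻¹ * s)
          have h4 : Real.exp (t⁻¹ * s) * Real.exp (-(t⁻¹ * s)) = 1 := by
            rw [← Real.exp_add]; simp
          have h5 : t⁻¹ * s * Real.exp (-(t⁻¹ * s)) ≤ 1 := by nlinarith
          have h6 : s * Real.exp (-(t⁻¹ * s)) = t * (t⁻¹ * s * Real.exp (-(t⁻¹ * s))) := by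
            field_simp
          rw [h6]
          nlinarith
        · rw [min_eq_right h]
          nlinarith [mul_pos ht hs]
    refine h1.congr_fun ?_ measurableSet_Ioi
    intro s hs
    have hs : 0 < s := hs
    have hm : 0 < min 1 s := lt_min one_pos hs
    simp only
    field_simp
  have hftc : ∫ s in (0:ℝ)..t, s * Real.exp (-(t⁻¹ * s)) = t ^ 2 * (1 - 2 * Real.exp (-1)) := by
    rw [intervalIntegral.integral_eq_sub_of_hasDerivAt
      (f := fun s => -(s * t + t ^ 2) * Real.exp (-(t⁻¹ * s)))]
    · simp only [inv_mul_cancel₀ ht.ne']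
      simp
      ring
    · intro s _
      have h1 : HasDerivAt (fun s : ℝ => -(s * t + t ^ 2)) (-(1 * t)) s :=
        (((hasDerivAt_id s).mul_const t).add_const _).neg
      have h2 : HasDerivAt (fun s : ℝ => Real.exp (-(t⁻¹ * s)))
          (Real.exp (-(t⁻¹ * s)) * (-(t⁻¹ * 1))) s :=
        ((hasDerivAt_id s).const_mul t⁻¹).neg.exp
      refine (h1.mul h2).congr_deriv ?_
      field_simp
      ring
    · exact Continuous.intervalIntegrable (by fun_prop) _ _
  have hsub : Ioc 0 t ⊆ Ioi (0:ℝ) := fun s hs => hs.1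
  have hc : 0 < 1 - 2 * Real.exp (-1) := by
    have := Real.exp_neg_one_lt_d9
    linarith
  have key : t ^ 2 * (1 - 2 * Real.exp (-1)) * μ t ≤ φ' t⁻¹ := by
    rw [hφ' _ hl, ← hftc, intervalIntegral.integral_of_le ht.le, ← integral_mul_const]
    calc _ ≤ ∫ s in Ioc 0 t, s * Real.exp (-(t⁻¹ * s)) * μ s := by
          refine setIntegral_mono_on ?_ (hint.mono_set hsub) measurableSet_Ioc ?_
          · exact Continuous.integrableOn_Ioc (by fun_prop)
          · intro s hs
            have := hs.1
            exact mul_le_mul_of_nonneg_left (hμdec s t hs.1 hs.2) (by positivity)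
      _ ≤ _ := by
          refine setIntegral_mono_set hint ?_ hsub.eventuallyLE
          filter_upwards [ae_restrict_mem measurableSet_Ioi] with s hs
          have hs : 0 < s := hs
          have := hμpos s hs
          simp only [Pi.zero_apply]
          positivity
  have hp : t ^ (-2 : ℝ) = (t ^ 2)⁻¹ := by
    rw [Real.rpow_neg ht.le]
    norm_cast
  rw [hp, ← mul_assoc, ← mul_inv, inv_mul_eq_div, le_div_iff₀ (by positivity)]
  linarith
end

section
/- Assume condition (A-1) holds with some index α ∈ [0,2). Then μ(t) ≍ t^{−2} φ'(t^{−1}) as t → 0+; i.e. there exist constants 0 < c ≤ C and t₀ > 0 such that c t^{−2} φ'(t^{−1}) ≤ μ(t) ≤ C t^{−2} φ'(t^{−1}) for all t ∈ (0, t₀). -/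
open MeasureTheory Set Filter Topology

lemma levy_aux_int (μ : ℝ → ℝ)
    (hμint : IntegrableOn (fun t => min 1 t * μ t) (Ioi 0)) (l : ℝ) (hl : 0 < l) :
    IntegrableOn (fun t => t * Real.exp (-(l * t)) * μ t) (Ioi 0) := by
  have h := Integrable.bdd_mul (c := max 1 (1 / l)) hμint
    (f := fun t : ℝ => t * Real.exp (-(l * t)) / min 1 t)
    (Measurable.aestronglyMeasurable (by fun_prop))
    (by
      filter_upwards [ae_restrict_mem measurableSet_Ioi] with t ht
      have ht : 0 < t := ht
      have hm : 0 < min 1 t := lt_min one_pos ht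
      have he : 0 < Real.exp (-(l * t)) := Real.exp_pos _
      rw [Real.norm_of_nonneg (by positivity), div_le_iff₀ hm]
      have h1 : Real.exp (-(l * t)) ≤ 1 := Real.exp_le_one_iff.2 (by
        have := mul_pos hl ht
        linarith)
      rcases le_total 1 t with h | h
      · rw [min_eq_left h, mul_one]
        refine le_trans ?_ (le_max_right _ _)
        rw [le_div_iff₀ hl, Real.exp_neg]
        have := Real.add_one_le_exp (l * t)
        have h3 : 0 < Real.exp (l * t) := Real.exp_pos _
        have : t * (Real.exp (l * t))⁻¹ * l = (l * t) / Real.exp (l * t) := by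
          field_simp
        rw [this, div_le_one h3]
        linarith
      · rw [min_eq_right h]
        have := le_max_left 1 (1 / l)
        nlinarith)
  refine h.congr ?_
  filter_upwards [ae_restrict_mem measurableSet_Ioi] with t ht
  have ht : 0 < t := ht
  have hm : 0 < min 1 t := lt_min one_pos ht
  field_simp

lemma levy_aux_gamma (r : ℝ) (hr : 0 < r) :
    IntegrableOn (fun t => t * Real.exp (-(r * t))) (Ioi 0) ∧
    ∫ t in Ioi (0:ℝ), t * Real.exp (-(r * t)) = 1 / r ^ 2 := by
  have h := Real.integral_rpow_mul_exp_neg_mul_Ioi (a := 2) (by norm_num) hr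
  have h2 : ∫ t in Ioi (0:ℝ), t * Real.exp (-(r * t)) = 1 / r ^ 2 := by
    norm_num at h
    rw [h]
    simp
  refine ⟨?_, h2⟩
  by_contra hc
  rw [integral_undef hc] at h2
  have : 0 < 1 / r ^ 2 := by positivity
  linarith

lemma levy_aux_upper (μ : ℝ → ℝ)
    (hμpos : ∀ t, 0 < t → 0 < μ t)
    (hμdec : ∀ s t, 0 < s → s ≤ t → μ t ≤ μ s)
    (hμint : IntegrableOn (fun t => min 1 t * μ t) (Ioi 0)) (t : ℝ) (ht : 0 < t) :
    μ t * Real.exp (-1) * (t ^ 2 / 2) ≤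
      ∫ s in Ioi (0:ℝ), s * Real.exp (-(t⁻¹ * s)) * μ s := by
  have hi := levy_aux_int μ hμint t⁻¹ (inv_pos.2 ht)
  have e1 : ∫ s in Ioc 0 t, μ t * Real.exp (-1) * s = μ t * Real.exp (-1) * (t ^ 2 / 2) := by
    rw [integral_const_mul, ← intervalIntegral.integral_of_le ht.le, integral_id]
    ring
  rw [← e1]
  calc _ ≤ ∫ s in Ioc 0 t, s * Real.exp (-(t⁻¹ * s)) * μ s := by
        refine setIntegral_mono_on ?_ (hi.mono_set Ioc_subset_Ioi_self) measurableSet_Ioc ?_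
        · exact (Continuous.integrableOn_Ioc (by fun_prop))
        · intro s hs
          have h1 := hμdec s t hs.1 hs.2
          have h2 : Real.exp (-1) ≤ Real.exp (-(t⁻¹ * s)) := by
            apply Real.exp_le_exp.2
            have : t⁻¹ * s ≤ 1 := by
              rw [inv_mul_le_iff₀ ht]
              linarith [hs.2]
            linarith
          have h3 : μ t * Real.exp (-1) ≤ μ s * Real.exp (-(t⁻¹ * s)) :=
            mul_le_mul h1 h2 (Real.exp_pos _).le (hμpos s hs.1).le
          have := mul_le_mul_of_nonneg_right h3 hs.1.le
          linarith
    _ ≤ _ := by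
        refine setIntegral_mono_set hi ?_ Ioc_subset_Ioi_self.eventuallyLE
        filter_upwards [ae_restrict_mem measurableSet_Ioi] with s hs
        have hs : 0 < s := hs
        have := hμpos s hs
        simp only [Pi.zero_apply]
        positivity

lemma levy_aux_lower (μ : ℝ → ℝ)
    (hμpos : ∀ t, 0 < t → 0 < μ t)
    (hμdec : ∀ s t, 0 < s → s ≤ t → μ t ≤ μ s)
    (hμint : IntegrableOn (fun t => min 1 t * μ t) (Ioi 0)) (t x : ℝ) (ht : 0 < t) (hx : 0 < x) :
    ∫ s in Ioi (0:ℝ), s * Real.exp (-((t⁻¹ * x) * s)) * μ s ≤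
      Real.exp 1 * (∫ s in Ioi (0:ℝ), s * Real.exp (-(t⁻¹ * s)) * μ s)
        + μ t * (1 / (t⁻¹ * x) ^ 2) := by
  have hti : 0 < t⁻¹ := inv_pos.2 ht
  have hr : 0 < t⁻¹ * x := by positivity
  have hi := levy_aux_int μ hμint t⁻¹ hti
  have hi2 := levy_aux_int μ hμint _ hr
  obtain ⟨hg, hg2⟩ := levy_aux_gamma _ hr
  rw [← hg2, ← integral_const_mul, ← integral_const_mul, ← integral_add (hi.const_mul _)
    (hg.const_mul _)]
  refine setIntegral_mono_on hi2 ((hi.const_mul _).add (hg.const_mul _)) measurableSet_Ioi ?_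
  intro s hs
  have hs : 0 < s := hs
  have hms := hμpos s hs
  have hmt := hμpos t ht
  rcases le_total s t with h | h
  · have h1 : Real.exp (-((t⁻¹ * x) * s)) ≤ 1 := Real.exp_le_one_iff.2 (by
      have := mul_pos hr hs
      linarith)
    have h2 : 1 ≤ Real.exp 1 * Real.exp (-(t⁻¹ * s)) := by
      rw [← Real.exp_add]
      apply Real.one_le_exp
      have : t⁻¹ * s ≤ 1 := by
        rw [inv_mul_le_iff₀ ht]
        linarith
      linarith
    have h3 := mul_le_mul_of_nonneg_right (h1.trans h2) (mul_pos hs hms).le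
    have h4 : 0 < μ t * (s * Real.exp (-((t⁻¹ * x) * s))) := by positivity
    nlinarith
  · have h1 := hμdec t s ht h
    have h3 : 0 < s * Real.exp (-((t⁻¹ * x) * s)) := by positivity
    have h4 : 0 < Real.exp 1 * (s * Real.exp (-(t⁻¹ * s)) * μ s) := by positivity
    have := mul_le_mul_of_nonneg_left h1 h3.le
    linarith

/-- Under (A-1) with `α ∈ [0,2)`, the Lévy density satisfies
`μ(t) ≍ t⁻² φ'(t⁻¹)` as `t → 0+`. -/
theorem levy_density_asymp
    (α : ℝ) (hα0 : 0 ≤ α) (hα2 : α < 2)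
    (μ φ φ' : ℝ → ℝ)
    (hμpos : ∀ t, 0 < t → 0 < μ t)
    (hμdec : ∀ s t, 0 < s → s ≤ t → μ t ≤ μ s)
    (hμint : IntegrableOn (fun t => min 1 t * μ t) (Ioi 0))
    (hφ : ∀ l, 0 < l → φ l = ∫ t in Ioi (0:ℝ), (1 - Real.exp (-(l * t))) * μ t)
    (hφ' : ∀ l, 0 < l → φ' l = ∫ t in Ioi (0:ℝ), t * Real.exp (-(l * t)) * μ t)
    (hA1 : ∀ x, 0 < x →
      Tendsto (fun l => φ' (l * x) / φ' l) atTop (𝓝 (x ^ (α / 2 - 1)))) :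
    ∃ c C t₀ : ℝ, 0 < c ∧ c ≤ C ∧ 0 < t₀ ∧ ∀ t, 0 < t → t < t₀ →
      c * (t ^ (-2 : ℝ) * φ' t⁻¹) ≤ μ t ∧ μ t ≤ C * (t ^ (-2 : ℝ) * φ' t⁻¹) := by
  have hpos : ∀ t, 0 < t → μ t * Real.exp (-1) * (t ^ 2 / 2) ≤ φ' t⁻¹ := by
    intro t ht
    rw [hφ' _ (inv_pos.2 ht)]
    exact levy_aux_upper μ hμpos hμdec hμint t ht
  have hpow : ∀ t : ℝ, 0 < t → t ^ (-2 : ℝ) = (t ^ 2)⁻¹ := by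
    intro t ht
    rw [Real.rpow_neg ht.le]
    norm_num
  obtain ⟨x, hx, hxe⟩ : ∃ x : ℝ, 0 < x ∧ Real.exp 1 + 1 < x ^ (α / 2 - 1) := by
    have hE : 0 < Real.exp 1 + 2 := by positivity
    refine ⟨(Real.exp 1 + 2) ^ (1 / (α / 2 - 1)), by positivity, ?_⟩
    rw [← Real.rpow_mul hE.le, one_div, inv_mul_cancel₀ (by linarith), Real.rpow_one]
    linarith
  obtain ⟨L, hL⟩ := eventually_atTop.1 ((hA1 x hx).eventually (lt_mem_nhds hxe))
  refine ⟨x ^ 2, max (x ^ 2) (2 * Real.exp 1), (max L 1)⁻¹, by positivity, le_max_left _ _,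
    by positivity, ?_⟩
  intro t ht htL
  have hup := hpos t ht
  have hmt := hμpos t ht
  have hP : 0 < φ' t⁻¹ := lt_of_lt_of_le (by positivity) hup
  rw [hpow t ht]
  constructor
  · have hl : L ≤ t⁻¹ := by
      have := (lt_inv_comm₀ ht (by positivity)).1 htL
      exact (le_max_left _ _).trans this.le
    have h1 := hL _ hl
    rw [lt_div_iff₀ hP] at h1
    have h2 := levy_aux_lower μ hμpos hμdec hμint t x ht hx
    have hti : 0 < t⁻¹ := inv_pos.2 ht
    rw [← hφ' _ hti, ← hφ' _ (mul_pos hti hx)] at h2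
    have h3 : φ' t⁻¹ ≤ μ t * (1 / (t⁻¹ * x) ^ 2) := by linarith
    have h4 : x ^ 2 * ((t ^ 2)⁻¹ * φ' t⁻¹) ≤
        x ^ 2 * ((t ^ 2)⁻¹ * (μ t * (1 / (t⁻¹ * x) ^ 2))) := by gcongr
    refine h4.trans (le_of_eq ?_)
    field_simp
  · have h1 : μ t ≤ 2 * Real.exp 1 * ((t ^ 2)⁻¹ * φ' t⁻¹) := by
      calc μ t = 2 * Real.exp 1 * ((t ^ 2)⁻¹ * (μ t * Real.exp (-1) * (t ^ 2 / 2))) := by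
            rw [Real.exp_neg]
            field_simp
        _ ≤ _ := by gcongr
    refine h1.trans ?_
    have := le_max_right (x ^ 2) (2 * Real.exp 1)
    gcongr
end

section
/- Assume condition (A-1) holds with index α = 2 (so φ' is slowly varying at infinity), and conditions (A-3) and (A-4) hold. Then μ(t) · t² / (t φ(t^{−1}) − φ'(t^{−1})) → 1 as t → 0+; equivalently, μ(t) ∼ t^{−2} (t φ(t^{−1}) − φ'(t^{−1})) as t → 0+. -/
open MeasureTheory Set Filter Topology

lemma aux_integral_pos {h : ℝ → ℝ} (hi : IntegrableOn h (Ioi 0)) (hp : ∀ t, 0 < t → 0 < h t) :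
    0 < ∫ t in Ioi (0:ℝ), h t := by
  rw [setIntegral_pos_iff_support_of_nonneg_ae _ hi]
  · have : Function.support h ∩ Ioi 0 = Ioi 0 := by
      ext t; simp only [mem_inter_iff, Function.mem_support, mem_Ioi, and_iff_right_iff_imp]
      intro ht; exact (hp t ht).ne'
    rw [this]; simp
  · filter_upwards [ae_restrict_mem measurableSet_Ioi] with t ht using (hp t ht).le

lemma aux_lhopital {F G F' G' : ℝ → ℝ} {L : ℝ}
    (hF : ∀ l, 0 < l → HasDerivAt F (F' l) l) (hG : ∀ l, 0 < l → HasDerivAt G (G' l) l)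
    (hG' : ∀ l, 0 < l → 0 < G' l) (hGt : Tendsto G atTop atTop)
    (h : Tendsto (fun l => F' l / G' l) atTop (𝓝 L)) :
    Tendsto (fun l => F l / G l) atTop (𝓝 L) := by
  -- one-sided version
  have key : ∀ (F F' : ℝ → ℝ) (L : ℝ), (∀ l, 0 < l → HasDerivAt F (F' l) l) →
      Tendsto (fun l => F' l / G' l) atTop (𝓝 L) → ∀ c, L < c → ∀ᶠ l in atTop, F l / G l < c := by
    intro F F' L hF h c hc
    obtain ⟨d, hd1, hd2⟩ := exists_between hc
    obtain ⟨a, ha⟩ := eventually_atTop.1 ((h.eventually (gt_mem_nhds hd1)).and (eventually_gt_atTop 0))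
    have hapos : 0 < a := (ha a le_rfl).2
    have hanti : AntitoneOn (fun l => F l - d * G l) (Ici a) := by
      apply antitoneOn_of_deriv_nonpos (convex_Ici a)
      · intro l hl
        have hl0 : 0 < l := lt_of_lt_of_le hapos hl
        exact ((hF l hl0).sub ((hG l hl0).const_mul d)).continuousAt.continuousWithinAt
      · intro l hl
        rw [interior_Ici] at hl
        have hl0 : 0 < l := lt_trans hapos hl
        exact ((hF l hl0).sub ((hG l hl0).const_mul d)).differentiableAt.differentiableWithinAt
      · intro l hl
        rw [interior_Ici] at hl
        have hl0 : 0 < l := lt_trans hapos hl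
        have hd := ((hF l hl0).sub ((hG l hl0).const_mul d)).deriv
        have e : deriv (fun l => F l - d * G l) l = F' l - d * G' l := hd
        rw [e]
        have := (ha l (le_of_lt hl)).1
        rw [div_lt_iff₀ (hG' l hl0)] at this
        linarith
    filter_upwards [eventually_ge_atTop a, hGt.eventually_gt_atTop 0,
      hGt.eventually_gt_atTop ((F a - d * G a) / (c - d))] with l hl h0 h1
    have := hanti (mem_Ici.2 le_rfl) (mem_Ici.2 hl) hl
    rw [div_lt_iff₀ (by linarith)] at h1
    rw [div_lt_iff₀ h0]
    simp only at this
    nlinarith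
  rw [tendsto_order]
  constructor
  · intro c hc
    have := key (fun l => - F l) (fun l => - F' l) (-L) (fun l hl => (hF l hl).neg)
      (by simpa [neg_div] using h.neg) (-c) (by linarith)
    filter_upwards [this] with l hl
    rw [neg_div] at hl; linarith
  · exact key F F' L hF h

lemma aux_monotone_density {g f : ℝ → ℝ} (hg0 : ∀ l, 0 < l → 0 < g l)
    (hg : ∀ l, 0 < l → HasDerivAt g (l * f l) l)
    (hf : ∀ s t, 0 < s → s ≤ t → f t ≤ f s)
    (h : ∀ x, 0 < x → Tendsto (fun l => g (l * x) / g l) atTop (𝓝 x)) :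
    Tendsto (fun l => l ^ 2 * f l / g l) atTop (𝓝 1) := by
  have key : ∀ b l, 0 < b → 0 < l → g (l * b) - g l ≤ f l * l ^ 2 * (b ^ 2 - 1) / 2 := by
    intro b l hb hl
    have hd : ∀ s, 0 < s → HasDerivAt (fun s => g s - f l * (s ^ 2 / 2)) (s * (f s - f l)) s := by
      intro s hs
      have := (hg s hs).sub ((((hasDerivAt_id s).pow 2).div_const 2).const_mul (f l))
      exact this.congr_deriv (by simp; ring)
    have hlb : 0 < l * b := mul_pos hl hb
    rcases le_total 1 b with h1 | h1
    · have hle : l ≤ l * b := by nlinarith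
      have : AntitoneOn (fun s => g s - f l * (s ^ 2 / 2)) (Icc l (l * b)) := by
        apply antitoneOn_of_deriv_nonpos (convex_Icc _ _)
        · intro s hs
          exact (hd s (lt_of_lt_of_le hl hs.1)).continuousAt.continuousWithinAt
        · intro s hs
          rw [interior_Icc] at hs
          exact (hd s (hl.trans hs.1)).differentiableAt.differentiableWithinAt
        · intro s hs
          rw [interior_Icc] at hs
          rw [(hd s (hl.trans hs.1)).deriv]
          have := hf l s hl hs.1.le
          have := hl.trans hs.1
          nlinarith
      have := this (left_mem_Icc.2 hle) (right_mem_Icc.2 hle) hle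
      simp only at this
      nlinarith
    · have hle : l * b ≤ l := by nlinarith
      have : MonotoneOn (fun s => g s - f l * (s ^ 2 / 2)) (Icc (l * b) l) := by
        apply monotoneOn_of_deriv_nonneg (convex_Icc _ _)
        · intro s hs
          exact (hd s (lt_of_lt_of_le hlb hs.1)).continuousAt.continuousWithinAt
        · intro s hs
          rw [interior_Icc] at hs
          exact (hd s (hlb.trans hs.1)).differentiableAt.differentiableWithinAt
        · intro s hs
          rw [interior_Icc] at hs
          have h0 := hlb.trans hs.1
          rw [(hd s h0).deriv]
          have := hf s l h0 hs.2.le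
          nlinarith
      have := this (left_mem_Icc.2 hle) (right_mem_Icc.2 hle) hle
      simp only at this
      nlinarith
  have key2 : ∀ b l, 0 < b → 0 < l →
      g (l * b) / g l - 1 ≤ (l ^ 2 * f l / g l) * ((b ^ 2 - 1) / 2) := by
    intro b l hb hl
    have := div_le_div_of_nonneg_right (key b l hb hl) (hg0 l hl).le
    have h0 := (hg0 l hl).ne'
    rw [sub_div, div_self h0] at this
    calc _ ≤ _ := this
      _ = _ := by ring
  have hcont : Tendsto (fun b : ℝ => 2 / (b + 1)) (𝓝 1) (𝓝 1) := by
    have : ContinuousAt (fun b : ℝ => 2 / (b + 1)) 1 := by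
      apply ContinuousAt.div <;> first | fun_prop | norm_num
    have h2 := this.tendsto
    norm_num at h2; exact h2
  rw [tendsto_order]
  constructor
  · intro a ha
    obtain ⟨b, hb1, hb2⟩ := (((hcont.eventually (lt_mem_nhds ha)).filter_mono
      nhdsWithin_le_nhds).and (self_mem_nhdsWithin (s := Ioi (1:ℝ)))).exists
    have hb2 : 1 < b := hb2
    have ht := (((h b (by linarith)).sub_const 1).div_const ((b ^ 2 - 1) / 2))
    have e : (b - 1) / ((b ^ 2 - 1) / 2) = 2 / (b + 1) := by
      have : b ^ 2 - 1 ≠ 0 := by nlinarith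
      have : b + 1 ≠ 0 := by linarith
      field_simp; ring
    rw [e] at ht
    filter_upwards [ht.eventually (lt_mem_nhds hb1), eventually_gt_atTop 0] with l hl hl0
    refine hl.trans_le ?_
    rw [div_le_iff₀ (by nlinarith)]
    exact key2 b l (by linarith) hl0
  · intro a ha
    obtain ⟨b, hb1, hb2, hb3⟩ := (((hcont.eventually (gt_mem_nhds ha)).filter_mono
      nhdsWithin_le_nhds).and (Ioo_mem_nhdsLT (show (0:ℝ) < 1 by norm_num))).exists
    have ht := (((h b hb2).sub_const 1).div_const ((b ^ 2 - 1) / 2))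
    have e : (b - 1) / ((b ^ 2 - 1) / 2) = 2 / (b + 1) := by
      have : b ^ 2 - 1 ≠ 0 := by nlinarith
      have : b + 1 ≠ 0 := by linarith
      field_simp; ring
    rw [e] at ht
    filter_upwards [ht.eventually (gt_mem_nhds hb1), eventually_gt_atTop 0] with l hl hl0
    refine lt_of_le_of_lt ?_ hl
    rw [le_div_iff_of_neg (by nlinarith)]
    exact key2 b l hb2 hl0


lemma aux_int {w G : ℝ → ℝ} {l : ℝ} (hl : 0 < l) (hw0 : ∀ t, 0 < t → 0 ≤ w t)
    (hw : IntegrableOn (fun t => Real.exp (-(l * t)) * w t) (Ioi 0)) (hG : Continuous G) :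
    IntegrableOn (fun t => G (Real.exp (-(l * t))) * (Real.exp (-(l * t)) * w t)) (Ioi 0) := by
  obtain ⟨C, hC⟩ := (isCompact_Icc (a := (0:ℝ)) (b := 1)).exists_bound_of_continuousOn hG.continuousOn
  refine Integrable.bdd_mul (c := C) hw ?_ ?_
  · exact (by fun_prop : Continuous fun t => G (Real.exp (-(l * t)))).aestronglyMeasurable
  · filter_upwards [ae_restrict_mem measurableSet_Ioi] with t ht
    have ht : 0 < t := ht
    apply hC
    exact ⟨(Real.exp_pos _).le, Real.exp_le_one_iff.2 (by nlinarith [mul_pos hl ht])⟩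

lemma aux_approx {w G P : ℝ → ℝ} {l ε : ℝ} (hl : 0 < l) (hw0 : ∀ t, 0 < t → 0 ≤ w t)
    (hw : IntegrableOn (fun t => Real.exp (-(l * t)) * w t) (Ioi 0)) (hG : Continuous G)
    (hP : Continuous P) (h : ∀ y ∈ Icc (0:ℝ) 1, |P y - G y| < ε) :
    |(∫ t in Ioi (0:ℝ), P (Real.exp (-(l * t))) * (Real.exp (-(l * t)) * w t)) -
      ∫ t in Ioi (0:ℝ), G (Real.exp (-(l * t))) * (Real.exp (-(l * t)) * w t)|
      ≤ ε * ∫ t in Ioi (0:ℝ), Real.exp (-(l * t)) * w t := by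
  rw [← integral_sub (aux_int hl hw0 hw hP) (aux_int hl hw0 hw hG), ← integral_const_mul,
    ← Real.norm_eq_abs]
  apply norm_integral_le_of_norm_le (hw.const_mul ε)
  filter_upwards [ae_restrict_mem measurableSet_Ioi] with t ht
  have ht : 0 < t := ht
  have h1 := h (Real.exp (-(l * t)))
    ⟨(Real.exp_pos _).le, Real.exp_le_one_iff.2 (by nlinarith [mul_pos hl ht])⟩
  have h2 : 0 ≤ Real.exp (-(l * t)) * w t := mul_nonneg (Real.exp_pos _).le (hw0 t ht)
  rw [← sub_mul, norm_mul, Real.norm_eq_abs, Real.norm_of_nonneg h2]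
  gcongr

lemma aux_exp_int {l : ℝ} (hl : 0 < l) :
    IntegrableOn (fun t => Real.exp (-(l * t)) * 1) (Ioi 0) := by
  have := exp_neg_integrableOn_Ioi 0 hl
  simpa using this

lemma aux_exp_val {l : ℝ} (hl : 0 < l) :
    ∫ t in Ioi (0:ℝ), Real.exp (-(l * t)) = l⁻¹ := by
  have := integral_exp_mul_Ioi (a := -l) (by linarith) 0
  simp only [neg_mul, mul_zero, Real.exp_zero, neg_zero] at this
  rw [this]; field_simp

lemma aux_karamata {w f : ℝ → ℝ} (hw0 : ∀ t, 0 < t → 0 ≤ w t)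
    (hw : ∀ l, 0 < l → IntegrableOn (fun t => Real.exp (-(l * t)) * w t) (Ioi 0))
    (hf : ∀ l, 0 < l → f l = ∫ t in Ioi (0:ℝ), Real.exp (-(l * t)) * w t)
    (hfp : ∀ l, 0 < l → 0 < f l)
    (h : ∀ x, 0 < x → Tendsto (fun l => f (l * x) / f l) atTop (𝓝 x⁻¹))
    {G : ℝ → ℝ} (hG : Continuous G) :
    Tendsto (fun l => (∫ t in Ioi (0:ℝ), G (Real.exp (-(l * t))) * (Real.exp (-(l * t)) * w t)) / f l)
      atTop (𝓝 (∫ t in Ioi (0:ℝ), G (Real.exp (-(1 * t))) * (Real.exp (-(1 * t)) * 1))) := by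
  have hpoly : ∀ p : Polynomial ℝ, Tendsto (fun l => (∫ t in Ioi (0:ℝ),
      p.eval (Real.exp (-(l * t))) * (Real.exp (-(l * t)) * w t)) / f l)
      atTop (𝓝 (∫ t in Ioi (0:ℝ), p.eval (Real.exp (-(1 * t))) * (Real.exp (-(1 * t)) * 1))) := by
    intro p
    induction p using Polynomial.induction_on' with
    | add p q hp hq =>
      have e := hp.add hq
      rw [← integral_add (aux_int one_pos (fun _ _ => zero_le_one) (aux_exp_int one_pos) p.continuous)
        (aux_int one_pos (fun _ _ => zero_le_one) (aux_exp_int one_pos) q.continuous)] at e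
      simp only [Polynomial.eval_add, add_mul]
      refine e.congr' ?_
      filter_upwards [eventually_gt_atTop 0] with l hl
      rw [integral_add (aux_int hl hw0 (hw l hl) p.continuous)
        (aux_int hl hw0 (hw l hl) q.continuous), add_div]
    | monomial n a =>
      have hn : (0:ℝ) < n + 1 := by positivity
      have e : ∀ l t : ℝ, Real.exp (-(l * t)) ^ n * Real.exp (-(l * t))
          = Real.exp (-(l * (n + 1) * t)) := by
        intro l t
        rw [← pow_succ, ← Real.exp_nat_mul]; congr 1; push_cast; ring
      simp only [Polynomial.eval_monomial, mul_assoc a, integral_const_mul, mul_one, mul_div_assoc]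
      simp only [← mul_assoc, e]
      rw [aux_exp_val (by linarith)]
      have := (h _ hn).const_mul a
      rw [one_mul]
      refine this.congr' ?_
      filter_upwards [eventually_gt_atTop 0] with l hl
      rw [hf _ (mul_pos hl hn)]
  rw [Metric.tendsto_atTop']
  intro ε hε
  obtain ⟨p, hp⟩ := exists_polynomial_near_of_continuousOn 0 1 G hG.continuousOn (ε / 3) (by linarith)
  obtain ⟨N, hN⟩ := Metric.tendsto_atTop'.1 (hpoly p) (ε / 3) (by linarith)
  refine ⟨max N 0, fun l hl => ?_⟩
  have hl0 : 0 < l := lt_of_le_of_lt (le_max_right _ _) hl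
  have h1 := hN l (lt_of_le_of_lt (le_max_left _ _) hl)
  have h2 := aux_approx hl0 hw0 (hw l hl0) hG p.continuous hp
  have h3 := aux_approx one_pos (fun _ _ => zero_le_one) (aux_exp_int one_pos) hG p.continuous hp
  rw [← hf l hl0] at h2
  have h4 : ∫ t in Ioi (0:ℝ), Real.exp (-(1 * t)) * 1 = 1 := by
    simp only [mul_one]; rw [aux_exp_val one_pos]; simp
  rw [h4] at h3
  have hf0 := hfp l hl0
  rw [Real.dist_eq] at h1 ⊢
  have h5 := div_le_div_of_nonneg_right h2 hf0.le
  rw [mul_div_assoc, div_self hf0.ne', ← abs_of_pos hf0, ← abs_div, sub_div] at h5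
  rw [abs_le] at h5 h3
  rw [abs_lt] at h1 ⊢
  constructor <;> linarith [h5.1, h5.2, h3.1, h3.2, h1.1, h1.2]

/-- Density version of Karamata's Tauberian theorem. -/
lemma aux_tauber {μ f : ℝ → ℝ} (hμpos : ∀ t, 0 < t → 0 < μ t)
    (hμdec : ∀ s t, 0 < s → s ≤ t → μ t ≤ μ s)
    (hw : ∀ l, 0 < l → IntegrableOn (fun t => Real.exp (-(l * t)) * (t ^ 2 * μ t)) (Ioi 0))
    (hf : ∀ l, 0 < l → f l = ∫ t in Ioi (0:ℝ), Real.exp (-(l * t)) * (t ^ 2 * μ t))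
    (hfp : ∀ l, 0 < l → 0 < f l)
    (h : ∀ x, 0 < x → Tendsto (fun l => f (l * x) / f l) atTop (𝓝 x⁻¹)) :
    Tendsto (fun l => μ l⁻¹ / (l ^ 3 * f l)) atTop (𝓝 1) := by
  have hw0 : ∀ t, 0 < t → 0 ≤ t ^ 2 * μ t := fun t ht => by have := hμpos t ht; positivity
  let G : ℝ → ℝ → ℝ → ℝ := fun c d y => max 0 ((y - Real.exp (-d)) * (Real.exp (-c) - y))
  have hGc : ∀ c d, Continuous (G c d) := fun c d => by simp only [G]; fun_prop
  have hG0 : ∀ c d y, 0 ≤ G c d y := fun c d y => le_max_left _ _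
  have hGz : ∀ c d s, c < d → G c d (Real.exp (-s)) = 0 ∨ (c ≤ s ∧ s ≤ d) := by
    intro c d s hcd
    by_contra! hh
    obtain ⟨h1, h2⟩ := hh
    apply h1
    apply max_eq_left
    rcases le_total c s with h3 | h3
    · have h4 : Real.exp (-s) ≤ Real.exp (-d) := Real.exp_le_exp.2 (by linarith [h2 h3])
      have h5 : Real.exp (-s) ≤ Real.exp (-c) := Real.exp_le_exp.2 (by linarith)
      nlinarith
    · have h4 : Real.exp (-d) ≤ Real.exp (-s) := Real.exp_le_exp.2 (by linarith)
      have h5 : Real.exp (-c) ≤ Real.exp (-s) := Real.exp_le_exp.2 (by linarith)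
      nlinarith
  let B : ℝ → ℝ → ℝ := fun c d => ∫ t in Ioi (0:ℝ), G c d (Real.exp (-(1 * t))) * (Real.exp (-(1 * t)) * 1)
  have hB : ∀ c d, 0 < c → c < d → 0 < B c d := by
    intro c d hc hcd
    simp only [B]
    rw [setIntegral_pos_iff_support_of_nonneg_ae _
      (aux_int one_pos (fun _ _ => zero_le_one) (aux_exp_int one_pos) (hGc c d))]
    · refine lt_of_lt_of_le ?_ (measure_mono (s := Ioo c d) ?_)
      · simpa using hcd
      · intro s hs
        refine ⟨?_, hc.trans hs.1⟩
        have h4 : Real.exp (-d) < Real.exp (-s) := Real.exp_lt_exp.2 (by linarith [hs.2])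
        have h5 : Real.exp (-s) < Real.exp (-c) := Real.exp_lt_exp.2 (by linarith [hs.1])
        rw [Function.mem_support]
        apply ne_of_gt
        rw [one_mul]
        have : 0 < G c d (Real.exp (-s)) := lt_max_of_lt_right (mul_pos (by linarith) (by linarith))
        have := Real.exp_pos (-s)
        positivity
    · refine Eventually.of_forall fun s => ?_
      exact mul_nonneg (hG0 _ _ _) (by positivity)
  have hscale : ∀ c d l, 0 < l →
      ∫ t in Ioi (0:ℝ), G c d (Real.exp (-(l * t))) * (Real.exp (-(l * t)) * 1) = l⁻¹ * B c d := by
    intro c d l hl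
    have := integral_comp_mul_left_Ioi
      (fun s => G c d (Real.exp (-(1 * s))) * (Real.exp (-(1 * s)) * 1)) 0 hl
    simpa [B] using this
  let A : ℝ → ℝ → ℝ → ℝ := fun c d l =>
    ∫ t in Ioi (0:ℝ), G c d (Real.exp (-(l * t))) * (Real.exp (-(l * t)) * (t ^ 2 * μ t))
  have hA : ∀ c d, Tendsto (fun l => A c d l / f l) atTop (𝓝 (B c d)) :=
    fun c d => aux_karamata hw0 hw hf hfp h (hGc c d)
  have hinv : Tendsto (fun c : ℝ => (c ^ 2)⁻¹) (𝓝 1) (𝓝 1) := by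
    have : ContinuousAt (fun c : ℝ => (c ^ 2)⁻¹) 1 := by
      apply ContinuousAt.inv₀ <;> first | fun_prop | norm_num
    have h2 := this.tendsto
    norm_num at h2; exact h2
  -- the two comparison estimates
  have hlow : ∀ c l, 1 < c → 0 < l → A 1 c l ≤ (c / l) ^ 2 * μ l⁻¹ * (l⁻¹ * B 1 c) := by
    intro c l hc hl
    rw [← hscale 1 c l hl, ← integral_const_mul]
    refine setIntegral_mono_on (aux_int hl hw0 (hw l hl) (hGc 1 c)) ?_ measurableSet_Ioi ?_
    · exact (aux_int hl (fun _ _ => zero_le_one) (aux_exp_int hl) (hGc 1 c)).const_mul _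
    · intro t ht
      have ht : 0 < t := ht
      rcases hGz 1 c (l * t) hc with h1 | ⟨h1, h2⟩
      · rw [h1]; simp
      · have h3 : l⁻¹ ≤ t := by rw [inv_le_iff_one_le_mul₀ hl]; linarith
        have h4 : t ≤ c / l := by rw [le_div_iff₀ hl]; linarith
        have h5 := hμdec l⁻¹ t (by positivity) h3
        have h6 := hμpos t ht
        have h7 : t ^ 2 * μ t ≤ (c / l) ^ 2 * μ l⁻¹ := by gcongr
        have h8 := mul_nonneg (hG0 1 c (Real.exp (-(l * t)))) (Real.exp_pos (-(l * t))).le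
        calc _ = (G 1 c (Real.exp (-(l * t))) * Real.exp (-(l * t))) * (t ^ 2 * μ t) := by ring
          _ ≤ (G 1 c (Real.exp (-(l * t))) * Real.exp (-(l * t))) * ((c / l) ^ 2 * μ l⁻¹) := by gcongr
          _ = _ := by ring
  have hup : ∀ c l, 0 < c → c < 1 → 0 < l → (c / l) ^ 2 * μ l⁻¹ * (l⁻¹ * B c 1) ≤ A c 1 l := by
    intro c l hc0 hc hl
    rw [← hscale c 1 l hl, ← integral_const_mul]
    refine setIntegral_mono_on ?_ (aux_int hl hw0 (hw l hl) (hGc c 1)) measurableSet_Ioi ?_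
    · exact (aux_int hl (fun _ _ => zero_le_one) (aux_exp_int hl) (hGc c 1)).const_mul _
    · intro t ht
      have ht : 0 < t := ht
      rcases hGz c 1 (l * t) hc with h1 | ⟨h1, h2⟩
      · rw [h1]; simp
      · have h3 : t ≤ l⁻¹ := by rw [← one_div, le_div_iff₀ hl]; linarith
        have h4 : c / l ≤ t := by rw [div_le_iff₀ hl]; linarith
        have h5 := hμdec t l⁻¹ ht h3
        have h6 := hμpos l⁻¹ (by positivity)
        have h7 : (c / l) ^ 2 * μ l⁻¹ ≤ t ^ 2 * μ t := by gcongr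
        have h8 := mul_nonneg (hG0 c 1 (Real.exp (-(l * t)))) (Real.exp_pos (-(l * t))).le
        calc _ = (G c 1 (Real.exp (-(l * t))) * Real.exp (-(l * t))) * ((c / l) ^ 2 * μ l⁻¹) := by ring
          _ ≤ (G c 1 (Real.exp (-(l * t))) * Real.exp (-(l * t))) * (t ^ 2 * μ t) := by gcongr
          _ = _ := by ring
  rw [tendsto_order]
  constructor
  · intro a ha
    obtain ⟨c, hc1, hc2⟩ := (((hinv.eventually (lt_mem_nhds ha)).filter_mono
      nhdsWithin_le_nhds).and (self_mem_nhdsWithin (s := Ioi (1:ℝ)))).exists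
    have hc2 : 1 < c := hc2
    have hb := hB 1 c one_pos hc2
    have ht := (hA 1 c).div_const (c ^ 2 * B 1 c)
    have e : B 1 c / (c ^ 2 * B 1 c) = (c ^ 2)⁻¹ := by field_simp
    rw [e] at ht
    filter_upwards [ht.eventually (lt_mem_nhds hc1), eventually_gt_atTop 0] with l hl hl0
    refine hl.trans_le ?_
    have hf0 := hfp l hl0
    rw [div_le_iff₀ (by positivity), div_le_iff₀ hf0]
    refine (hlow c l hc2 hl0).trans_eq ?_
    field_simp
  · intro a ha
    obtain ⟨c, hc1, hc2, hc3⟩ := (((hinv.eventually (gt_mem_nhds ha)).filter_mono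
      nhdsWithin_le_nhds).and (Ioo_mem_nhdsLT (show (0:ℝ) < 1 by norm_num))).exists
    have hb := hB c 1 hc2 hc3
    have ht := (hA c 1).div_const (c ^ 2 * B c 1)
    have e : B c 1 / (c ^ 2 * B c 1) = (c ^ 2)⁻¹ := by field_simp
    rw [e] at ht
    filter_upwards [ht.eventually (gt_mem_nhds hc1), eventually_gt_atTop 0] with l hl hl0
    refine lt_of_le_of_lt ?_ hl
    have hf0 := hfp l hl0
    rw [le_div_iff₀ (by positivity), le_div_iff₀ hf0]
    refine le_trans (le_of_eq ?_) (hup c l hc2 hc3 hl0)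
    field_simp

lemma aux_meas {μ : ℝ → ℝ} (hμdec : ∀ s t, 0 < s → s ≤ t → μ t ≤ μ s) :
    AEStronglyMeasurable μ (volume.restrict (Ioi 0)) :=
  (aemeasurable_restrict_of_antitoneOn measurableSet_Ioi
    (fun s hs t _ hst => hμdec s t hs hst)).aestronglyMeasurable

lemma aux_dom {μ h : ℝ → ℝ} {C : ℝ} (hμpos : ∀ t, 0 < t → 0 < μ t)
    (hμdec : ∀ s t, 0 < s → s ≤ t → μ t ≤ μ s)
    (hμint : IntegrableOn (fun t => min 1 t * μ t) (Ioi 0))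
    (hh : Continuous h) (hb : ∀ t, 0 < t → |h t| ≤ C * min 1 t) :
    IntegrableOn (fun t => h t * μ t) (Ioi 0) := by
  refine Integrable.mono' (hμint.const_mul C) (hh.aestronglyMeasurable.mul (aux_meas hμdec)) ?_
  filter_upwards [ae_restrict_mem measurableSet_Ioi] with t ht
  have ht : 0 < t := ht
  rw [norm_mul, Real.norm_of_nonneg (hμpos t ht).le, ← mul_assoc, Real.norm_eq_abs]
  exact mul_le_mul_of_nonneg_right (hb t ht) (hμpos t ht).le

lemma aux_pow_int {μ : ℝ → ℝ} (hμpos : ∀ t, 0 < t → 0 < μ t)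
    (hμdec : ∀ s t, 0 < s → s ≤ t → μ t ≤ μ s)
    (hμint : IntegrableOn (fun t => min 1 t * μ t) (Ioi 0)) (k : ℕ) {l : ℝ} (hl : 0 < l) :
    IntegrableOn (fun t => t ^ (k + 1) * Real.exp (-(l * t)) * μ t) (Ioi 0) := by
  refine aux_dom (C := 1 + (k + 1).factorial / l ^ (k + 1)) hμpos hμdec hμint (by fun_prop) ?_
  intro t ht
  have hlt : 0 < l * t := mul_pos hl ht
  rw [abs_of_nonneg (by positivity)]
  have hC : 0 < ((k + 1).factorial : ℝ) / l ^ (k + 1) := by positivity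
  rcases le_total 1 t with h1 | h1
  · rw [min_eq_left h1]
    have h2 := Real.pow_div_factorial_le_exp (l * t) hlt.le (k + 1)
    rw [div_le_iff₀ (by positivity), mul_pow] at h2
    have h3 : t ^ (k + 1) * Real.exp (-(l * t)) ≤ (k + 1).factorial / l ^ (k + 1) := by
      rw [Real.exp_neg, ← div_eq_mul_inv, div_le_div_iff₀ (by positivity) (by positivity)]
      linarith
    linarith
  · rw [min_eq_right h1]
    have h2 : t ^ (k + 1) ≤ t := by
      rw [pow_succ]
      exact mul_le_of_le_one_left ht.le (pow_le_one₀ ht.le h1)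
    have h3 : Real.exp (-(l * t)) ≤ 1 := Real.exp_le_one_iff.2 (by linarith)
    calc t ^ (k + 1) * Real.exp (-(l * t)) ≤ t * 1 := by gcongr
      _ ≤ _ := by nlinarith

lemma aux_one_int {μ : ℝ → ℝ} (hμpos : ∀ t, 0 < t → 0 < μ t)
    (hμdec : ∀ s t, 0 < s → s ≤ t → μ t ≤ μ s)
    (hμint : IntegrableOn (fun t => min 1 t * μ t) (Ioi 0)) {l : ℝ} (hl : 0 < l) :
    IntegrableOn (fun t => (1 - Real.exp (-(l * t))) * μ t) (Ioi 0) := by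
  refine aux_dom (C := 1 + l) hμpos hμdec hμint (by fun_prop) ?_
  intro t ht
  have hlt : 0 < l * t := mul_pos hl ht
  have h1 : Real.exp (-(l * t)) ≤ 1 := Real.exp_le_one_iff.2 (by linarith)
  have h2 := Real.add_one_le_exp (-(l * t))
  have h3 := Real.exp_pos (-(l * t))
  rw [abs_of_nonneg (by linarith)]
  rcases le_total 1 t with h | h
  · rw [min_eq_left h]; linarith
  · rw [min_eq_right h]; nlinarith

lemma aux_deriv_pow {μ : ℝ → ℝ} (hμpos : ∀ t, 0 < t → 0 < μ t)
    (hμdec : ∀ s t, 0 < s → s ≤ t → μ t ≤ μ s)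
    (hμint : IntegrableOn (fun t => min 1 t * μ t) (Ioi 0))
    {H : ℝ → ℝ → ℝ} (k : ℕ) (c : ℝ) {l : ℝ} (hl : 0 < l)
    (hc : |c| ≤ 1) (hH : ∀ x, 0 < x → IntegrableOn (fun t => H x t * μ t) (Ioi 0))
    (hd : ∀ x t, HasDerivAt (fun x => H x t) (c * (t ^ (k + 1) * Real.exp (-(x * t)))) x) :
    HasDerivAt (fun x => ∫ t in Ioi (0:ℝ), H x t * μ t)
      (∫ t in Ioi (0:ℝ), c * (t ^ (k + 1) * Real.exp (-(l * t))) * μ t) l := by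
  refine (hasDerivAt_integral_of_dominated_loc_of_deriv_le
    (bound := fun t => t ^ (k + 1) * Real.exp (-(l / 2 * t)) * μ t)
    (μ := volume.restrict (Ioi 0)) (F := fun x t => H x t * μ t)
    (F' := fun x t => c * (t ^ (k + 1) * Real.exp (-(x * t))) * μ t)
    (Ioi_mem_nhds (show l / 2 < l by linarith)) ?_ (hH l hl) ?_ ?_ ?_ ?_).2
  · filter_upwards [lt_mem_nhds hl] with x hx using (hH x hx).aestronglyMeasurable
  · exact (by fun_prop : Continuous fun t : ℝ =>
      c * (t ^ (k + 1) * Real.exp (-(l * t)))).aestronglyMeasurable.mul (aux_meas hμdec)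
  · filter_upwards [ae_restrict_mem measurableSet_Ioi] with t ht x hx
    have ht : 0 < t := ht
    have hx : l / 2 < x := hx
    have hm := hμpos t ht
    rw [norm_mul, norm_mul, Real.norm_of_nonneg hm.le, Real.norm_eq_abs,
      Real.norm_of_nonneg (by positivity)]
    have h1 : Real.exp (-(x * t)) ≤ Real.exp (-(l / 2 * t)) := Real.exp_le_exp.2 (by nlinarith)
    have h2 : |c| * (t ^ (k + 1) * Real.exp (-(x * t))) ≤
        1 * (t ^ (k + 1) * Real.exp (-(l / 2 * t))) := by gcongr
    rw [one_mul] at h2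
    exact mul_le_mul_of_nonneg_right h2 hm.le
  · exact aux_pow_int hμpos hμdec hμint k (by linarith)
  · exact Eventually.of_forall fun t x _ => (hd x t).mul_const _

/-- Under (A-1) with `α = 2` (`φ'` slowly varying), (A-3) and (A-4), the Lévy density
satisfies `μ(t) ∼ t⁻² (t φ(t⁻¹) - φ'(t⁻¹))` as `t → 0+`. -/
theorem levy_density_asymp_alpha_two
    (μ φ φ' : ℝ → ℝ)
    (hμpos : ∀ t, 0 < t → 0 < μ t)
    (hμdec : ∀ s t, 0 < s → s ≤ t → μ t ≤ μ s)
    (hμint : IntegrableOn (fun t => min 1 t * μ t) (Ioi 0))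
    (hφ : ∀ l, 0 < l → φ l = ∫ t in Ioi (0:ℝ), (1 - Real.exp (-(l * t))) * μ t)
    (hφ' : ∀ l, 0 < l → φ' l = ∫ t in Ioi (0:ℝ), t * Real.exp (-(l * t)) * μ t)
    (hA1 : ∀ x, 0 < x →
      Tendsto (fun l => φ' (l * x) / φ' l) atTop (𝓝 (1 : ℝ)))
    (u : ℝ → ℝ)
    (hupos : ∀ t, 0 < t → 0 < u t)
    (hudec : ∀ s t, 0 < s → s ≤ t → u t ≤ u s)
    (hu : ∀ l, 0 < l → ∫ t in Ioi (0:ℝ), Real.exp (-(l * t)) * u t = 1 / φ l)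
    (ψ' : ℝ → ℝ)
    (hψ' : ∀ l, 0 < l → HasDerivAt (fun s => s / φ s) (ψ' l) l)
    (hA4 : ∀ x, 0 < x →
      Tendsto (fun l => ψ' (l * x) / ψ' l) atTop (𝓝 x⁻¹)) :
    Tendsto (fun t => μ t * t ^ 2 / (t * φ t⁻¹ - φ' t⁻¹)) (𝓝[>] (0:ℝ)) (𝓝 1) := by
  have hφ'int := fun l (hl : 0 < l) => aux_pow_int hμpos hμdec hμint 0 hl
  have hfint := fun l (hl : 0 < l) => aux_pow_int hμpos hμdec hμint 1 hl
  have hφint := fun l (hl : 0 < l) => aux_one_int hμpos hμdec hμint hl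
  simp only [zero_add, pow_one, one_add_one_eq_two] at hφ'int hfint
  obtain ⟨f, hf⟩ : ∃ f : ℝ → ℝ, ∀ l, f l =
    ∫ t in Ioi (0:ℝ), t ^ 2 * Real.exp (-(l * t)) * μ t := ⟨_, fun _ => rfl⟩
  have hdexp : ∀ x t : ℝ, HasDerivAt (fun x => Real.exp (-(x * t))) (-(t * Real.exp (-(x * t)))) x := by
    intro x t
    have := (((hasDerivAt_id x).mul_const t).neg).exp
    exact this.congr_deriv (by simp; ring)
  have hφd : ∀ l, 0 < l → HasDerivAt φ (φ' l) l := by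
    intro l hl
    have := aux_deriv_pow (H := fun x t => 1 - Real.exp (-(x * t))) hμpos hμdec hμint 0 1 hl
      (by simp) hφint (fun x t => ((hdexp x t).const_sub 1).congr_deriv (by simp))
    simp only [zero_add, pow_one, one_mul] at this
    rw [← hφ' l hl] at this
    refine this.congr_of_eventuallyEq ?_
    filter_upwards [lt_mem_nhds hl] with x hx using hφ x hx
  have hφ'd : ∀ l, 0 < l → HasDerivAt φ' (-f l) l := by
    intro l hl
    have := aux_deriv_pow (H := fun x t => t * Real.exp (-(x * t))) hμpos hμdec hμint 1 (-1) hl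
      (by simp) hφ'int (fun x t => ((hdexp x t).const_mul t).congr_deriv (by ring))
    have e : (∫ t in Ioi (0:ℝ), -1 * (t ^ (1 + 1) * Real.exp (-(l * t))) * μ t) = - f l := by
      rw [hf, ← integral_neg]; congr 1; ext t; ring
    rw [e] at this
    refine this.congr_of_eventuallyEq ?_
    filter_upwards [lt_mem_nhds hl] with x hx using hφ' x hx
  have hφpos : ∀ l, 0 < l → 0 < φ l := by
    intro l hl
    rw [hφ l hl]
    refine aux_integral_pos (hφint l hl) fun t ht => mul_pos ?_ (hμpos t ht)
    have : Real.exp (-(l * t)) < 1 := Real.exp_lt_one_iff.2 (by nlinarith [mul_pos hl ht])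
    linarith
  have hφ'pos : ∀ l, 0 < l → 0 < φ' l := by
    intro l hl
    rw [hφ' l hl]
    exact aux_integral_pos (hφ'int l hl) fun t ht => mul_pos (by positivity) (hμpos t ht)
  have hfpos : ∀ l, 0 < l → 0 < f l := by
    intro l hl
    rw [hf l]
    exact aux_integral_pos (hfint l hl) fun t ht => mul_pos (by positivity) (hμpos t ht)
  have hfanti : ∀ s t, 0 < s → s ≤ t → f t ≤ f s := by
    intro s t hs hst
    rw [hf, hf]
    refine setIntegral_mono_on (hfint t (by linarith)) (hfint s hs) measurableSet_Ioi fun x hx => ?_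
    have hx : 0 < x := hx
    have := hμpos x hx
    have h1 : Real.exp (-(t * x)) ≤ Real.exp (-(s * x)) := Real.exp_le_exp.2 (by nlinarith)
    gcongr
  have hφ'anti : ∀ s t, 0 < s → s ≤ t → φ' t ≤ φ' s := by
    intro s t hs hst
    rw [hφ' s hs, hφ' t (by linarith)]
    refine setIntegral_mono_on (hφ'int t (by linarith)) (hφ'int s hs) measurableSet_Ioi fun x hx => ?_
    have hx : 0 < x := hx
    have := hμpos x hx
    have h1 : Real.exp (-(t * x)) ≤ Real.exp (-(s * x)) := Real.exp_le_exp.2 (by nlinarith)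
    gcongr
  have hφmono : MonotoneOn φ (Ioi 0) := by
    apply monotoneOn_of_deriv_nonneg (convex_Ioi 0)
    · intro l hl; exact (hφd l hl).continuousAt.continuousWithinAt
    · intro l hl
      rw [interior_Ioi] at hl
      exact (hφd l hl).differentiableAt.differentiableWithinAt
    · intro l hl
      rw [interior_Ioi] at hl
      rw [(hφd l hl).deriv]; exact (hφ'pos l hl).le
  have hg0 : ∀ l, 0 < l → 0 < φ l - l * φ' l := by
    intro l hl
    rw [hφ l hl, hφ' l hl, ← integral_const_mul,
      ← integral_sub (hφint l hl) ((hφ'int l hl).const_mul l)]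
    refine aux_integral_pos ((hφint l hl).sub ((hφ'int l hl).const_mul l)) fun t ht => ?_
    have h1 := Real.add_one_lt_exp (mul_pos hl ht).ne'
    have h2 : Real.exp (l * t) * Real.exp (-(l * t)) = 1 := by rw [← Real.exp_add]; simp
    have h3 := Real.exp_pos (-(l * t))
    have h4 : 0 < (1 - Real.exp (-(l * t))) - l * t * Real.exp (-(l * t)) := by nlinarith
    have := mul_pos h4 (hμpos t ht)
    linarith
  -- φ tends to infinity
  have hφstep : ∀ l, 0 < l → l * φ' (l * 2) ≤ φ (l * 2) - φ l := by
    intro l hl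
    obtain ⟨c, hc, he⟩ := exists_hasDerivAt_eq_slope φ φ' (show l < l * 2 by linarith)
      (fun x hx => (hφd x (by linarith [hx.1])).continuousAt.continuousWithinAt)
      (fun x hx => hφd x (by linarith [hx.1]))
    have h1 := hφ'anti c (l * 2) (by linarith [hc.1]) hc.2.le
    rw [he, le_div_iff₀ (by linarith)] at h1
    linarith
  have hφtop : Tendsto φ atTop atTop := by
    obtain ⟨a, ha⟩ := eventually_atTop.1 (((hA1 2 (by norm_num)).eventually
      (lt_mem_nhds (show (1/2:ℝ) < 1 by norm_num))).and (eventually_gt_atTop 0))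
    have ha0 : 0 < a := (ha a le_rfl).2
    have hpos : ∀ n : ℕ, 0 < a * 2 ^ n := fun n => by positivity
    have hge : ∀ n : ℕ, a ≤ a * 2 ^ n := fun n =>
      le_mul_of_one_le_right ha0.le (one_le_pow₀ (by norm_num))
    have h1 : ∀ n : ℕ, a * φ' a ≤ a * 2 ^ n * φ' (a * 2 ^ n) := by
      intro n
      induction n with
      | zero => simp
      | succ n ih =>
        have h2 := (ha _ (hge n)).1
        rw [lt_div_iff₀ (hφ'pos _ (hpos n))] at h2
        rw [pow_succ, ← mul_assoc]
        have := hpos n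
        nlinarith
    have h2 : ∀ n : ℕ, n * (a * φ' a / 2) ≤ φ (a * 2 ^ n) := by
      intro n
      induction n with
      | zero => simpa using (hφpos a ha0).le
      | succ n ih =>
        have h3 := hφstep _ (hpos n)
        have h4 := h1 (n + 1)
        rw [pow_succ, ← mul_assoc] at h4 ⊢
        push_cast
        linarith
    have hc : 0 < a * φ' a / 2 := by have := hφ'pos a ha0; positivity
    rw [tendsto_atTop]
    intro M
    obtain ⟨n, hn⟩ := exists_nat_ge (M / (a * φ' a / 2))
    rw [div_le_iff₀ hc] at hn
    filter_upwards [eventually_ge_atTop (a * 2 ^ n)] with x hx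
    exact (hn.trans (h2 n)).trans (hφmono (hpos n) (lt_of_lt_of_le (hpos n) hx) hx)
  have hφrv : ∀ x, 0 < x → Tendsto (fun l => φ (l * x) / φ l) atTop (𝓝 x) := by
    intro x hx
    refine aux_lhopital (F' := fun l => φ' (l * x) * x) ?_ hφd hφ'pos hφtop ?_
    · intro l hl
      exact ((hφd (l * x) (mul_pos hl hx)).comp l
        ((hasDerivAt_id l).mul_const x)).congr_deriv (by simp)
    · have := (hA1 x hx).mul_const x
      rw [one_mul] at this
      refine this.congr fun l => ?_
      ring
  have hψe : ∀ l, 0 < l → φ l - l * φ' l = ψ' l * φ l ^ 2 := by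
    intro l hl
    have h1 := (hasDerivAt_id l).div (hφd l hl) (hφpos l hl).ne'
    have h2 := (hψ' l hl).unique h1
    have := (hφpos l hl).ne'
    rw [h2]; simp only [id]; field_simp
  have hgrv : ∀ x, 0 < x → Tendsto (fun l => (φ (l * x) - l * x * φ' (l * x)) /
      (φ l - l * φ' l)) atTop (𝓝 x) := by
    intro x hx
    have := (hA4 x hx).mul ((hφrv x hx).pow 2)
    have e : x⁻¹ * x ^ 2 = x := by field_simp
    rw [e] at this
    refine this.congr' ?_
    filter_upwards [eventually_gt_atTop 0] with l hl
    rw [hψe l hl, hψe (l * x) (mul_pos hl hx), div_pow, div_mul_div_comm]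
  have hmd : Tendsto (fun l => l ^ 2 * f l / (φ l - l * φ' l)) atTop (𝓝 1) := by
    refine aux_monotone_density (g := fun l => φ l - l * φ' l) hg0 ?_ hfanti hgrv
    intro l hl
    exact ((hφd l hl).sub ((hasDerivAt_id l).mul (hφ'd l hl))).congr_deriv (by simp)
  have hfrv : ∀ x, 0 < x → Tendsto (fun l => f (l * x) / f l) atTop (𝓝 x⁻¹) := by
    intro x hx
    have h1 := hmd.comp (tendsto_id.atTop_mul_const hx)
    have h2 := ((h1.mul (hgrv x hx)).div hmd one_ne_zero).div_const (x ^ 2)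
    have e : 1 * x / 1 / x ^ 2 = x⁻¹ := by field_simp
    rw [e] at h2
    refine h2.congr' ?_
    filter_upwards [eventually_gt_atTop 0] with l hl
    have := (hg0 l hl).ne'
    have := (hg0 (l * x) (mul_pos hl hx)).ne'
    have := (hfpos l hl).ne'
    simp only [Function.comp, id, Pi.div_apply]
    field_simp
  have ecomm : ∀ l, (fun t : ℝ => Real.exp (-(l * t)) * (t ^ 2 * μ t)) =
      fun t => t ^ 2 * Real.exp (-(l * t)) * μ t := by
    intro l; ext t; ring
  have hT := aux_tauber hμpos hμdec (f := f) (fun l hl => by rw [ecomm]; exact hfint l hl)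
    (fun l hl => by rw [hf, ecomm]) hfpos hfrv
  have hfin : Tendsto (fun l => μ l⁻¹ / (l * (φ l - l * φ' l))) atTop (𝓝 1) := by
    have := hT.mul hmd
    rw [one_mul] at this
    refine this.congr' ?_
    filter_upwards [eventually_gt_atTop 0] with l hl
    have := (hg0 l hl).ne'
    have := (hfpos l hl).ne'
    field_simp
  refine (hfin.comp tendsto_inv_nhdsGT_zero).congr' ?_
  filter_upwards [self_mem_nhdsWithin] with t ht
  have ht : 0 < t := ht
  have h0 := (hg0 t⁻¹ (by positivity)).ne'
  have h1 : t * φ t⁻¹ - φ' t⁻¹ = t * (φ t⁻¹ - t⁻¹ * φ' t⁻¹) := by field_simp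
  simp only [Function.comp, inv_inv]
  rw [h1]
  generalize φ t⁻¹ - t⁻¹ * φ' t⁻¹ = G at h0
  field_simp
end

section
/- Assume condition (A-1) holds with index α = 2 and condition (A-3) holds. Then u(t) · φ'(t^{−1}) → 1 and u(t) · t · φ(t^{−1}) → 1 as t → 0+; that is, u(t) ∼ 1/φ'(t^{−1}) ∼ 1/(t φ(t^{−1})) as t → 0+. -/
open MeasureTheory Set Filter Topology

lemma rec_tendsto (e q : ℝ → ℝ) (he : ∀ l, 0 < l → 0 ≤ e l)
    (hrec : ∀ l, 0 < l → e l ≤ q l / 2 * e (l / 2) + (q l - 1))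
    (hq : Tendsto q atTop (𝓝 1))
    (hb : ∀ L, 0 < L → ∃ M, ∀ l, L ≤ l → l ≤ 2 * L → e l ≤ M) :
    Tendsto e atTop (𝓝 0) := by
  rw [Metric.tendsto_atTop]
  intro ε0 hε0
  obtain ⟨ε, hε, hε1, hε2⟩ : ∃ ε, 0 < ε ∧ ε ≤ 1 / 2 ∧ 5 * ε < ε0 :=
    ⟨min (1 / 2) (ε0 / 6), by positivity, min_le_left _ _, by
      have := min_le_right (1 / 2) (ε0 / 6); linarith⟩
  have h1 : ∀ᶠ l in atTop, q l < 1 + ε := hq.eventually (gt_mem_nhds (by linarith))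
  obtain ⟨L0, hL0⟩ := eventually_atTop.1 h1
  set L := max L0 1 with hL
  have hLpos : 0 < L := lt_of_lt_of_le one_pos (le_max_right _ _)
  obtain ⟨M, hM⟩ := hb L hLpos
  have hM0 : 0 ≤ M := (he L hLpos).trans (hM L le_rfl (by linarith))
  have key : ∀ n : ℕ, ∀ l, 2 ^ n * L ≤ l → l ≤ 2 ^ (n + 1) * L →
      e l ≤ 4 * ε + (3 / 4) ^ n * M := by
    intro n
    induction n with
    | zero =>
      intro l h1 h2
      have := hM l (by simpa using h1) (by simpa using h2)
      simp; linarith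
    | succ n ih =>
      intro l h1 h2
      have hp : (1 : ℝ) ≤ 2 ^ (n + 1) := one_le_pow₀ (by norm_num)
      have hLl : L ≤ l := by nlinarith
      have hl0 : 0 < l := by linarith
      have h3 := ih (l / 2) (by rw [pow_succ] at h1; linarith) (by
        rw [pow_succ] at h2; linarith)
      have h4 := hrec l hl0
      have h5 := hL0 l ((le_max_left _ _).trans hLl)
      have h6 := he (l / 2) (by linarith)
      have h7 : q l / 2 * e (l / 2) ≤ 3 / 4 * e (l / 2) :=
        mul_le_mul_of_nonneg_right (by linarith) h6
      rw [pow_succ]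
      linarith
  obtain ⟨N, hN⟩ : ∃ N : ℕ, (3 / 4 : ℝ) ^ N * M < ε := by
    have : Tendsto (fun n : ℕ => (3 / 4 : ℝ) ^ n * M) atTop (𝓝 (0 * M)) :=
      (tendsto_pow_atTop_nhds_zero_of_lt_one (by norm_num) (by norm_num)).mul_const M
    rw [zero_mul] at this
    exact (this.eventually (gt_mem_nhds hε)).exists
  refine ⟨2 ^ N * L, fun l hl => ?_⟩
  have hp : (1 : ℝ) ≤ 2 ^ N := one_le_pow₀ (by norm_num)
  have hLl : L ≤ l := by nlinarith
  have hl0 : 0 < l := by linarith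
  obtain ⟨n, hn1, hn2⟩ := exists_nat_pow_near (x := l / L) (y := (2 : ℝ))
    ((one_le_div hLpos).2 hLl) (by norm_num)
  rw [le_div_iff₀ hLpos] at hn1
  rw [div_lt_iff₀ hLpos] at hn2
  have hNn : N ≤ n := by
    by_contra hcon
    have : n + 1 ≤ N := by omega
    have : (2 : ℝ) ^ (n + 1) ≤ 2 ^ N := pow_le_pow_right₀ (by norm_num) this
    nlinarith
  have h8 := key n l hn1 hn2.le
  have h9 : (3 / 4 : ℝ) ^ n ≤ (3 / 4) ^ N :=
    pow_le_pow_of_le_one (by norm_num) (by norm_num) hNn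
  have h10 := mul_le_mul_of_nonneg_right h9 hM0
  rw [Real.dist_eq, sub_zero, abs_of_nonneg (he l hl0)]
  linarith

lemma int_exp (l c : ℝ) (hl : 0 < l) :
    IntegrableOn (fun t => Real.exp (-(l * t))) (Ioi c) ∧
    ∫ t in Ioi c, Real.exp (-(l * t)) = Real.exp (-(l * c)) / l := by
  have h := integrableOn_exp_mul_Ioi (a := -l) (by linarith) c
  have h2 := integral_exp_mul_Ioi (a := -l) (by linarith) c
  simp only [neg_mul] at h h2
  refine ⟨h, h2.trans ?_⟩
  rw [neg_div_neg_eq]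

/-- The kernel `l w (4 w - k)` with `w = exp (-l t)`. -/
lemma int_ker (l c k : ℝ) (hl : 0 < l) :
    IntegrableOn (fun t => l * Real.exp (-(l * t)) * (4 * Real.exp (-(l * t)) - k)) (Ioi c) ∧
    ∫ t in Ioi c, l * Real.exp (-(l * t)) * (4 * Real.exp (-(l * t)) - k)
      = 2 * Real.exp (-(l * c)) ^ 2 - k * Real.exp (-(l * c)) := by
  obtain ⟨h1, h2⟩ := int_exp l c hl
  obtain ⟨h3, h4⟩ := int_exp (2 * l) c (by linarith)
  have e : (fun t => l * Real.exp (-(l * t)) * (4 * Real.exp (-(l * t)) - k)) =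
      fun t => 4 * l * Real.exp (-(2 * l * t)) - k * l * Real.exp (-(l * t)) := by
    funext t
    have : Real.exp (-(2 * l * t)) = Real.exp (-(l * t)) ^ 2 := by
      rw [← Real.exp_nat_mul]; congr 1; push_cast; ring
    rw [this]; ring
  rw [e]
  refine ⟨(h3.const_mul _).sub (h1.const_mul _), ?_⟩
  rw [integral_sub (h3.const_mul _) (h1.const_mul _), integral_const_mul, integral_const_mul,
    h2, h4]
  have : Real.exp (-(2 * l * c)) = Real.exp (-(l * c)) ^ 2 := by
    rw [← Real.exp_nat_mul]; congr 1; push_cast; ring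
  rw [this]; field_simp; ring

lemma int_ker_u (u : ℝ → ℝ) (l k F1 F2 C : ℝ) (hl : 0 < l)
    (i1 : IntegrableOn (fun t => Real.exp (-(l * t)) * u t) (Ioi 0))
    (i2 : IntegrableOn (fun t => Real.exp (-(2 * l * t)) * u t) (Ioi 0))
    (h1 : l * ∫ t in Ioi (0:ℝ), Real.exp (-(l * t)) * u t = F1)
    (h2 : 2 * l * ∫ t in Ioi (0:ℝ), Real.exp (-(2 * l * t)) * u t = F2) :
    IntegrableOn (fun t => l * Real.exp (-(l * t)) * (4 * Real.exp (-(l * t)) - k) * (u t - C))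
      (Ioi 0) ∧
    ∫ t in Ioi (0:ℝ), l * Real.exp (-(l * t)) * (4 * Real.exp (-(l * t)) - k) * (u t - C)
      = 2 * F2 - k * F1 - C * (2 - k) := by
  obtain ⟨j1, j2⟩ := int_ker l 0 k hl
  have e : (fun t => l * Real.exp (-(l * t)) * (4 * Real.exp (-(l * t)) - k) * (u t - C)) =
      fun t => (4 * l * (Real.exp (-(2 * l * t)) * u t) - k * l * (Real.exp (-(l * t)) * u t))
        - C * (l * Real.exp (-(l * t)) * (4 * Real.exp (-(l * t)) - k)) := by
    funext t
    have : Real.exp (-(2 * l * t)) = Real.exp (-(l * t)) ^ 2 := by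
      rw [← Real.exp_nat_mul]; congr 1; push_cast; ring
    rw [this]; ring
  have i3 : IntegrableOn (fun t => 4 * l * (Real.exp (-(2 * l * t)) * u t)
      - k * l * (Real.exp (-(l * t)) * u t)) (Ioi 0) :=
    (i2.const_mul (4 * l)).sub (i1.const_mul (k * l))
  rw [e]
  refine ⟨i3.sub (j1.const_mul _), ?_⟩
  rw [integral_sub i3 (j1.const_mul _), integral_sub (i2.const_mul _) (i1.const_mul _),
    integral_const_mul, integral_const_mul, integral_const_mul, j2, ← h1, ← h2]
  simp; ring

lemma u_bounds (u : ℝ → ℝ) (l F1 F2 : ℝ) (hl : 0 < l)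
    (hudec : ∀ s t, 0 < s → s ≤ t → u t ≤ u s)
    (i1 : IntegrableOn (fun t => Real.exp (-(l * t)) * u t) (Ioi 0))
    (i2 : IntegrableOn (fun t => Real.exp (-(2 * l * t)) * u t) (Ioi 0))
    (h1 : l * ∫ t in Ioi (0:ℝ), Real.exp (-(l * t)) * u t = F1)
    (h2 : 2 * l * ∫ t in Ioi (0:ℝ), Real.exp (-(2 * l * t)) * u t = F2) :
    u (Real.log 2 / l) ≤ 2 * F2 - F1 ∧ 3 * F1 - 2 * F2 ≤ u (Real.log 2 / l) := by
  set T := Real.log 2 / l with hT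
  have hlog2 : 0 < Real.log 2 := Real.log_pos (by norm_num)
  have hTpos : 0 < T := by positivity
  have hlT : l * T = Real.log 2 := by rw [hT]; field_simp
  have hexpT : Real.exp (-(l * T)) = 1 / 2 := by
    rw [hlT, Real.exp_neg, Real.exp_log (by norm_num)]; norm_num
  have hsub : Ioi T ⊆ Ioi (0:ℝ) := Ioi_subset_Ioi hTpos.le
  -- generic comparisons: w = exp (-l t)
  have cmp : ∀ a c t : ℝ, 0 < a → l * c = Real.log a →
      (t ≤ c → 1 ≤ a * Real.exp (-(l * t))) ∧ (c ≤ t → a * Real.exp (-(l * t)) ≤ 1) := by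
    intro a c t ha hc
    have : a * Real.exp (-(l * t)) = Real.exp (l * c - l * t) := by
      rw [sub_eq_add_neg, Real.exp_add, hc, Real.exp_log ha]
    rw [this]
    constructor
    · intro h; apply Real.one_le_exp; nlinarith
    · intro h; apply Real.exp_le_one_iff.2; nlinarith
  constructor
  · obtain ⟨I, V⟩ := int_ker_u u l 1 F1 F2 (u T) hl i1 i2 h1 h2
    set T4 := Real.log 4 / l with hT4
    have hlT4 : l * T4 = Real.log 4 := by rw [hT4]; field_simp
    have hT4pos : 0 < T4 := by have : 0 < Real.log 4 := Real.log_pos (by norm_num)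
                               positivity
    obtain ⟨j1, j2⟩ := int_ker l T 1 hl
    have hle : ∫ t in Ioi (0:ℝ), (Ioi T).indicator
        (fun t => l * Real.exp (-(l * t)) * (4 * Real.exp (-(l * t)) - 1) * (u T4 - u T)) t ≤
        ∫ t in Ioi (0:ℝ), l * Real.exp (-(l * t)) * (4 * Real.exp (-(l * t)) - 1) * (u t - u T) := by
      refine setIntegral_mono_on ?_ I measurableSet_Ioi ?_
      · exact ((integrable_indicator_iff measurableSet_Ioi).2 (j1.mul_const _)).integrableOn
      · intro t ht
        have ht0 : 0 < t := ht
        have hw : 0 < l * Real.exp (-(l * t)) := by positivity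
        by_cases h : T < t
        · rw [indicator_of_mem (by exact h), mul_assoc (l * Real.exp (-(l * t))), mul_assoc (l * Real.exp (-(l * t)))]
          refine mul_le_mul_of_nonneg_left ?_ hw.le
          rcases le_total t T4 with h' | h'
          · have a1 := (cmp 4 T4 t (by norm_num) hlT4).1 h'
            have a2 := hudec t T4 ht0 h'
            nlinarith
          · have a1 := (cmp 4 T4 t (by norm_num) hlT4).2 h'
            have a2 := hudec T4 t hT4pos h'
            nlinarith
        · rw [indicator_of_notMem (by exact h)]
          push Not at h
          have a1 := (cmp 2 T t (by norm_num) hlT).1 h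
          have a2 := hudec t T ht0 h
          exact mul_nonneg (mul_nonneg hw.le (by linarith)) (by linarith)
    rw [setIntegral_indicator measurableSet_Ioi, inter_eq_right.2 hsub, integral_mul_const, j2,
      hexpT, V] at hle
    linarith
  · obtain ⟨I, V⟩ := int_ker_u u l 3 F1 F2 (u T) hl i1 i2 h1 h2
    set T4 := Real.log (4 / 3) / l with hT4
    have hlT4 : l * T4 = Real.log (4 / 3) := by rw [hT4]; field_simp
    have hT4pos : 0 < T4 := by have : 0 < Real.log (4 / 3) := Real.log_pos (by norm_num)
                               positivity
    obtain ⟨j1, j2⟩ := int_ker l T 3 hl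
    obtain ⟨k1, k2⟩ := int_ker l 0 3 hl
    have hI : IntegrableOn ((Ioi T).indicator
        (fun t => l * Real.exp (-(l * t)) * (4 * Real.exp (-(l * t)) - 3) * (u T4 - u T)))
        (Ioi 0) :=
      ((integrable_indicator_iff measurableSet_Ioi).2 (j1.mul_const _)).integrableOn
    have hle : ∫ t in Ioi (0:ℝ),
        (l * Real.exp (-(l * t)) * (4 * Real.exp (-(l * t)) - 3) * (u T4 - u T) - (Ioi T).indicator
        (fun t => l * Real.exp (-(l * t)) * (4 * Real.exp (-(l * t)) - 3) * (u T4 - u T)) t) ≤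
        ∫ t in Ioi (0:ℝ), l * Real.exp (-(l * t)) * (4 * Real.exp (-(l * t)) - 3) * (u t - u T) := by
      refine setIntegral_mono_on ((k1.mul_const _).sub hI) I measurableSet_Ioi ?_
      intro t ht
      have ht0 : 0 < t := ht
      have hw : 0 < l * Real.exp (-(l * t)) := by positivity
      by_cases h : T < t
      · rw [indicator_of_mem (by exact h), sub_self]
        have a1 := (cmp 2 T t (by norm_num) hlT).2 h.le
        have a2 := hudec T t hTpos h.le
        rw [mul_assoc (l * Real.exp (-(l * t)))]
        exact mul_nonneg hw.le (mul_nonneg_of_nonpos_of_nonpos (by linarith) (by linarith))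
      · rw [indicator_of_notMem (by exact h), sub_zero, mul_assoc (l * Real.exp (-(l * t))), mul_assoc (l * Real.exp (-(l * t)))]
        refine mul_le_mul_of_nonneg_left ?_ hw.le
        rcases le_total t T4 with h' | h'
        · have a1 := (cmp (4 / 3) T4 t (by norm_num) hlT4).1 h'
          have a2 := hudec t T4 ht0 h'
          nlinarith
        · have a1 := (cmp (4 / 3) T4 t (by norm_num) hlT4).2 h'
          have a2 := hudec T4 t hT4pos h'
          nlinarith
    rw [integral_sub (k1.mul_const _) hI, setIntegral_indicator measurableSet_Ioi,
      inter_eq_right.2 hsub, integral_mul_const, integral_mul_const, j2, k2,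
      hexpT, V] at hle
    simp at hle
    linarith

lemma phi_integrable (μ g : ℝ → ℝ) (C : ℝ)
    (hμpos : ∀ t, 0 < t → 0 < μ t)
    (hμdec : ∀ s t, 0 < s → s ≤ t → μ t ≤ μ s)
    (hμint : IntegrableOn (fun t => min 1 t * μ t) (Ioi 0))
    (hg : Continuous g) (hg0 : ∀ t, 0 < t → 0 ≤ g t) (hgC : ∀ t, 0 < t → g t ≤ C * min 1 t) :
    IntegrableOn (fun t => g t * μ t) (Ioi 0) := by
  have hm : AEMeasurable μ (volume.restrict (Ioi 0)) :=
    aemeasurable_restrict_of_antitoneOn measurableSet_Ioi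
      (fun s hs t _ hst => hμdec s t hs hst)
  refine Integrable.mono' (hμint.const_mul C) (hg.aemeasurable.mul hm).aestronglyMeasurable ?_
  refine (ae_restrict_iff' measurableSet_Ioi).2 (Eventually.of_forall fun t ht => ?_)
  have ht0 : 0 < t := ht
  rw [Real.norm_of_nonneg (mul_nonneg (hg0 t ht0) (hμpos t ht0).le), ← mul_assoc]
  exact mul_le_mul_of_nonneg_right (hgC t ht0) (hμpos t ht0).le



/-- Under (A-1) with `α = 2` and (A-3), the potential density satisfies
`u(t) ∼ 1/φ'(t⁻¹) ∼ 1/(t φ(t⁻¹))` as `t → 0+`. -/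
theorem potential_density_asymp_alpha_two
    (μ φ φ' : ℝ → ℝ)
    (hμpos : ∀ t, 0 < t → 0 < μ t)
    (hμdec : ∀ s t, 0 < s → s ≤ t → μ t ≤ μ s)
    (hμint : IntegrableOn (fun t => min 1 t * μ t) (Ioi 0))
    (hφ : ∀ l, 0 < l → φ l = ∫ t in Ioi (0:ℝ), (1 - Real.exp (-(l * t))) * μ t)
    (hφ' : ∀ l, 0 < l → φ' l = ∫ t in Ioi (0:ℝ), t * Real.exp (-(l * t)) * μ t)
    (hA1 : ∀ x, 0 < x →
      Tendsto (fun l => φ' (l * x) / φ' l) atTop (𝓝 (1 : ℝ)))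
    (u : ℝ → ℝ)
    (hupos : ∀ t, 0 < t → 0 < u t)
    (hudec : ∀ s t, 0 < s → s ≤ t → u t ≤ u s)
    (hu : ∀ l, 0 < l → ∫ t in Ioi (0:ℝ), Real.exp (-(l * t)) * u t = 1 / φ l) :
    Tendsto (fun t => u t * φ' t⁻¹) (𝓝[>] (0:ℝ)) (𝓝 1) ∧
    Tendsto (fun t => u t * t * φ t⁻¹) (𝓝[>] (0:ℝ)) (𝓝 1) := by
  have iφ : ∀ l, 0 < l → IntegrableOn (fun t => (1 - Real.exp (-(l * t))) * μ t) (Ioi 0) := by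
    intro l hl
    refine phi_integrable μ _ (max 1 l) hμpos hμdec hμint (by fun_prop) ?_ ?_
    · intro t ht
      have : Real.exp (-(l * t)) ≤ 1 := Real.exp_le_one_iff.2 (by nlinarith)
      linarith
    · intro t ht
      have a1 := Real.exp_pos (-(l * t))
      have a2 := Real.add_one_le_exp (-(l * t))
      have a3 := le_max_left 1 l
      have a4 := le_max_right 1 l
      rcases le_total 1 t with h | h
      · rw [min_eq_left h]; linarith
      · rw [min_eq_right h]; nlinarith
  have iφ' : ∀ l, 0 < l → IntegrableOn (fun t => t * Real.exp (-(l * t)) * μ t) (Ioi 0) := by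
    intro l hl
    refine phi_integrable μ _ (max 1 (1 / l)) hμpos hμdec hμint (by fun_prop) ?_ ?_
    · intro t ht
      positivity
    · intro t ht
      have a1 := Real.exp_pos (-(l * t))
      have a0 : Real.exp (-(l * t)) ≤ 1 := Real.exp_le_one_iff.2 (by nlinarith)
      have a3 := le_max_left 1 (1 / l)
      have a4 := le_max_right 1 (1 / l)
      rcases le_total 1 t with h | h
      · rw [min_eq_left h, mul_one]
        refine le_trans ?_ a4
        rw [le_div_iff₀ hl]
        have a2 := Real.add_one_le_exp (l * t)
        have a5 : Real.exp (l * t) * Real.exp (-(l * t)) = 1 := by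
          rw [← Real.exp_add]; simp
        nlinarith
      · rw [min_eq_right h]; nlinarith
  have pφ' : ∀ l, 0 < l → 0 < φ' l := by
    intro l hl
    rw [hφ' l hl, setIntegral_pos_iff_support_of_nonneg_ae _ (iφ' l hl)]
    · have : Function.support (fun t => t * Real.exp (-(l * t)) * μ t) ∩ Ioi 0 = Ioi 0 := by
        refine inter_eq_right.2 fun t ht => ?_
        have ht0 : 0 < t := ht
        have := hμpos t ht0
        exact (by positivity : 0 < t * Real.exp (-(l * t)) * μ t).ne'
      rw [this]; simp
    · refine (ae_restrict_iff' measurableSet_Ioi).2 (Eventually.of_forall fun t ht => ?_)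
      have ht0 : 0 < t := ht
      have := hμpos t ht0
      simp only [Pi.zero_apply]
      positivity
  have low : ∀ l, 0 < l → l * φ' l ≤ φ l := by
    intro l hl
    rw [hφ' l hl, hφ l hl, ← integral_const_mul]
    refine setIntegral_mono_on ((iφ' l hl).const_mul l) (iφ l hl) measurableSet_Ioi ?_
    intro t ht
    have ht0 : 0 < t := ht
    rw [← mul_assoc]
    refine mul_le_mul_of_nonneg_right ?_ (hμpos t ht0).le
    have a1 := Real.exp_pos (-(l * t))
    have a2 := Real.add_one_le_exp (l * t)
    have a5 : Real.exp (l * t) * Real.exp (-(l * t)) = 1 := by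
      rw [← Real.exp_add]; simp
    nlinarith
  have pφ : ∀ l, 0 < l → 0 < φ l := fun l hl =>
    lt_of_lt_of_le (mul_pos hl (pφ' l hl)) (low l hl)
  have step : ∀ l, 0 < l → φ l ≤ φ (l / 2) + l / 2 * φ' (l / 2) := by
    intro l hl
    have hl2 : 0 < l / 2 := by linarith
    rw [hφ' _ hl2, hφ _ hl2, hφ l hl, ← integral_const_mul,
      ← integral_add (iφ _ hl2) ((iφ' _ hl2).const_mul _)]
    refine setIntegral_mono_on (iφ l hl) ((iφ _ hl2).add ((iφ' _ hl2).const_mul _))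
      measurableSet_Ioi ?_
    intro t ht
    have ht0 : 0 < t := ht
    have hm := (hμpos t ht0).le
    have a1 := Real.exp_pos (-(l / 2 * t))
    have a2 := Real.add_one_le_exp (-(l / 2 * t))
    have a5 : Real.exp (-(l * t)) = Real.exp (-(l / 2 * t)) * Real.exp (-(l / 2 * t)) := by
      rw [← Real.exp_add]; congr 1; ring
    rw [a5]
    have : 1 - Real.exp (-(l / 2 * t)) * Real.exp (-(l / 2 * t)) ≤
      (1 - Real.exp (-(l / 2 * t))) + l / 2 * (t * Real.exp (-(l / 2 * t))) := by nlinarith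
    calc _ ≤ _ := mul_le_mul_of_nonneg_right this hm
      _ = _ := by ring
  have mφ : ∀ a b, 0 < a → a ≤ b → φ a ≤ φ b := by
    intro a b ha hab
    rw [hφ a ha, hφ b (by linarith)]
    refine setIntegral_mono_on (iφ a ha) (iφ b (by linarith)) measurableSet_Ioi ?_
    intro t ht
    have ht0 : 0 < t := ht
    refine mul_le_mul_of_nonneg_right ?_ (hμpos t ht0).le
    have : Real.exp (-(b * t)) ≤ Real.exp (-(a * t)) := Real.exp_le_exp.2 (by nlinarith)
    linarith
  have mφ' : ∀ a b, 0 < a → a ≤ b → φ' b ≤ φ' a := by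
    intro a b ha hab
    rw [hφ' a ha, hφ' b (by linarith)]
    refine setIntegral_mono_on (iφ' b (by linarith)) (iφ' a ha) measurableSet_Ioi ?_
    intro t ht
    have ht0 : 0 < t := ht
    refine mul_le_mul_of_nonneg_right ?_ (hμpos t ht0).le
    have : Real.exp (-(b * t)) ≤ Real.exp (-(a * t)) := Real.exp_le_exp.2 (by nlinarith)
    exact mul_le_mul_of_nonneg_left this ht0.le
  -- the ratio `φ l / (l φ' l)` tends to one
  have hr0 : Tendsto (fun l => φ l / (l * φ' l) - 1) atTop (𝓝 0) := by
    refine rec_tendsto _ (fun l => φ' (l / 2) / φ' l) ?_ ?_ ?_ ?_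
    · intro l hl
      have := (one_le_div (mul_pos hl (pφ' l hl))).2 (low l hl)
      linarith
    · intro l hl
      have p1 := pφ' l hl
      have p2 := pφ' (l / 2) (by linarith)
      have : φ' (l / 2) / φ' l / 2 * (φ (l / 2) / (l / 2 * φ' (l / 2)) - 1)
          + (φ' (l / 2) / φ' l - 1) = (φ (l / 2) + l / 2 * φ' (l / 2)) / (l * φ' l) - 1 := by
        field_simp; ring
      rw [this]
      have := div_le_div_of_nonneg_right (step l hl) (mul_pos hl p1).le
      linarith
    · simpa [div_eq_mul_inv] using hA1 (1 / 2) (by norm_num)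
    · intro L hL
      refine ⟨φ (2 * L) / (L * φ' (2 * L)) - 1, fun l h1 h2 => ?_⟩
      have hl : 0 < l := by linarith
      have p2 := pφ' (2 * L) (by linarith)
      have := div_le_div₀ (pφ (2 * L) (by linarith)).le (mφ l (2 * L) hl h2) (mul_pos hL p2)
        (mul_le_mul h1 (mφ' l (2 * L) hl h2) p2.le hl.le)
      linarith
  have hr : Tendsto (fun l => φ l / (l * φ' l)) atTop (𝓝 1) := by
    simpa using hr0.add_const 1
  -- `l / φ l` is slowly varying
  have hf : ∀ c, 0 < c → Tendsto (fun l => c * φ l / φ (l * c)) atTop (𝓝 1) := by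
    intro c hc
    have hc' : Tendsto (fun l : ℝ => l * c) atTop atTop := tendsto_id.atTop_mul_const hc
    have h := (hr.div (hr.comp hc') one_ne_zero).div (hA1 c hc) one_ne_zero
    simp only [div_one] at h
    refine h.congr' ?_
    filter_upwards [eventually_gt_atTop 0] with l hl
    have p1 := pφ' l hl
    have p2 := pφ' (l * c) (by positivity)
    have p3 := pφ (l * c) (by positivity)
    simp only [Pi.div_apply, Function.comp]
    field_simp
  have iu : ∀ l, 0 < l → IntegrableOn (fun t => Real.exp (-(l * t)) * u t) (Ioi 0) := by
    intro l hl
    by_contra h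
    have h1 := hu l hl
    rw [integral_undef h] at h1
    exact (one_div_pos.2 (pφ l hl)).ne h1
  have hlog2 : 0 < Real.log 2 := Real.log_pos (by norm_num)
  have bd : ∀ l, 0 < l → u (Real.log 2 / l) ≤ 2 * (2 * l / φ (2 * l)) - l / φ l ∧
      3 * (l / φ l) - 2 * (2 * l / φ (2 * l)) ≤ u (Real.log 2 / l) := by
    intro l hl
    refine u_bounds u l _ _ hl hudec (iu l hl) (iu (2 * l) (by linarith)) ?_ ?_
    · rw [hu l hl, mul_one_div]
    · rw [hu (2 * l) (by linarith), mul_one_div]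
  have hmain : Tendsto (fun l => u (Real.log 2 / l) * (φ l / l)) atTop (𝓝 1) := by
    have h2 := hf 2 (by norm_num)
    have t1 : Tendsto (fun l => 2 * (2 * φ l / φ (l * 2)) - 1) atTop (𝓝 1) := by
      have := (h2.const_mul 2).sub_const 1
      norm_num at this; exact this
    have t2 : Tendsto (fun l => 3 - 2 * (2 * φ l / φ (l * 2))) atTop (𝓝 1) := by
      have := (h2.const_mul 2).const_sub 3
      norm_num at this; exact this
    refine tendsto_of_tendsto_of_tendsto_of_le_of_le' t2 t1 ?_ ?_
    · filter_upwards [eventually_gt_atTop 0] with l hl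
      have p1 := pφ l hl
      have p2 := pφ (2 * l) (by linarith)
      have := mul_le_mul_of_nonneg_right (bd l hl).2 (div_pos p1 hl).le
      refine le_trans (le_of_eq ?_) this
      rw [mul_comm l 2]; field_simp
    · filter_upwards [eventually_gt_atTop 0] with l hl
      have p1 := pφ l hl
      have p2 := pφ (2 * l) (by linarith)
      have := mul_le_mul_of_nonneg_right (bd l hl).1 (div_pos p1 hl).le
      refine le_trans this (le_of_eq ?_)
      rw [mul_comm l 2]; field_simp
  have hm2 : Tendsto (fun l => u l⁻¹ * l⁻¹ * φ l) atTop (𝓝 1) := by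
    have hc' : Tendsto (fun l : ℝ => l * Real.log 2) atTop atTop :=
      tendsto_id.atTop_mul_const hlog2
    have h := (hmain.comp hc').mul (hf _ hlog2)
    rw [one_mul] at h
    refine h.congr' ?_
    filter_upwards [eventually_gt_atTop 0] with l hl
    have p2 := pφ (l * Real.log 2) (by positivity)
    have e : Real.log 2 / (l * Real.log 2) = l⁻¹ := by field_simp
    simp only [Function.comp, e]
    field_simp
  have hm1 : Tendsto (fun l => u l⁻¹ * φ' l) atTop (𝓝 1) := by
    have h := hm2.div hr one_ne_zero
    rw [div_one] at h
    refine h.congr' ?_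
    filter_upwards [eventually_gt_atTop 0] with l hl
    have p1 := pφ l hl
    have p2 := pφ' l hl
    simp only [Pi.div_apply]
    field_simp
  constructor
  · have := hm1.comp tendsto_inv_nhdsGT_zero
    simpa [Function.comp_def] using this
  · have := hm2.comp tendsto_inv_nhdsGT_zero
    simpa [Function.comp_def] using this
end

section
/- Let d ≥ 3 be an integer and assume condition (A-1) holds with some index α ∈ [0,2). Then the Lévy density of the subordinate Brownian motion satisfies j(r) ≍ r^{−d−2} φ'(r^{−2}) as r → 0+. -/
open MeasureTheory Set Filter Topology

namespace SBM

lemma aemeas (μ : ℝ → ℝ) (hμdec : ∀ s t, 0 < s → s ≤ t → μ t ≤ μ s) :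
    AEStronglyMeasurable μ (volume.restrict (Ioi (0:ℝ))) := by
  have h : AntitoneOn μ (Ioi 0) := fun a ha b _ hab => hμdec a b ha hab
  exact (aemeasurable_restrict_of_antitoneOn measurableSet_Ioi h).aestronglyMeasurable

lemma integ (μ : ℝ → ℝ)
    (hμpos : ∀ t, 0 < t → 0 < μ t)
    (hμdec : ∀ s t, 0 < s → s ≤ t → μ t ≤ μ s)
    (hμint : IntegrableOn (fun t => min 1 t * μ t) (Ioi 0)) (l : ℝ) (hl : 0 < l) :
    IntegrableOn (fun t => t * Real.exp (-(l * t)) * μ t) (Ioi 0) := by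
  have hm := aemeas μ hμdec
  refine Integrable.mono' (hμint.const_mul (1 + 1 / l)) ?_ ?_
  · refine AEStronglyMeasurable.mul ?_ hm
    exact (by fun_prop : Continuous fun t : ℝ => t * Real.exp (-(l * t))).aestronglyMeasurable
  · filter_upwards [ae_restrict_mem measurableSet_Ioi] with t ht
    have ht : 0 < t := ht
    have h0 := hμpos t ht
    rw [Real.norm_of_nonneg (by positivity), ← mul_assoc]
    refine mul_le_mul_of_nonneg_right ?_ h0.le
    have hl' : 0 < 1 / l := by positivity
    have e1 : Real.exp (-(l * t)) ≤ 1 := by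
      rw [Real.exp_le_one_iff]; nlinarith [mul_pos hl ht]
    have h1 : t * Real.exp (-(l * t)) ≤ t := by nlinarith
    have h2 : t * Real.exp (-(l * t)) ≤ 1 / l := by
      rw [Real.exp_neg, ← div_eq_mul_inv, div_le_div_iff₀ (Real.exp_pos _) hl]
      nlinarith [Real.add_one_le_exp (l * t)]
    rcases le_total 1 t with h | h
    · rw [min_eq_left h]; linarith
    · rw [min_eq_right h]; nlinarith

lemma lemA (μ φ' : ℝ → ℝ)
    (hμpos : ∀ t, 0 < t → 0 < μ t)
    (hμdec : ∀ s t, 0 < s → s ≤ t → μ t ≤ μ s)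
    (hμint : IntegrableOn (fun t => min 1 t * μ t) (Ioi 0))
    (hφ' : ∀ l, 0 < l → φ' l = ∫ t in Ioi (0:ℝ), t * Real.exp (-(l * t)) * μ t)
    (t : ℝ) (ht : 0 < t) :
    t ^ 2 / 4 * Real.exp (-1) * μ t ≤ φ' t⁻¹ := by
  have hti : 0 < t⁻¹ := by positivity
  have hI := integ μ hμpos hμdec hμint t⁻¹ hti
  rw [hφ' _ hti]
  have hsub : Ioc (t / 2) t ⊆ Ioi 0 := fun x hx => by
    have := hx.1; simp only [mem_Ioi]; linarith
  calc t ^ 2 / 4 * Real.exp (-1) * μ t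
      = ∫ x in Ioc (t / 2) t, (t / 2 * Real.exp (-1) * μ t) := by
        rw [setIntegral_const]
        simp only [measureReal_def, Real.volume_Ioc, smul_eq_mul]
        rw [ENNReal.toReal_ofReal (by linarith)]; ring
    _ ≤ ∫ x in Ioc (t / 2) t, x * Real.exp (-(t⁻¹ * x)) * μ x := by
        refine setIntegral_mono_on ?_ (hI.mono_set hsub) measurableSet_Ioc ?_
        · exact integrableOn_const (by simp)
        · intro x hx
          have hx0 : 0 < x := hsub hx
          have h1 : μ t ≤ μ x := hμdec x t hx0 hx.2
          have h2 : Real.exp (-1) ≤ Real.exp (-(t⁻¹ * x)) := by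
            apply Real.exp_le_exp.2
            have : t⁻¹ * x ≤ t⁻¹ * t := mul_le_mul_of_nonneg_left hx.2 hti.le
            rw [inv_mul_cancel₀ ht.ne'] at this
            linarith
          have h3 := hx.1.le
          have h4 := (hμpos t ht).le
          gcongr
    _ ≤ _ := by
        refine setIntegral_mono_set hI ?_ hsub.eventuallyLE
        filter_upwards [ae_restrict_mem measurableSet_Ioi] with x hx
        have hx : 0 < x := hx
        have := hμpos x hx
        simp only [Pi.zero_apply]; positivity

lemma lemB (μ φ' : ℝ → ℝ)
    (hμpos : ∀ t, 0 < t → 0 < μ t)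
    (hμdec : ∀ s t, 0 < s → s ≤ t → μ t ≤ μ s)
    (hμint : IntegrableOn (fun t => min 1 t * μ t) (Ioi 0))
    (hφ' : ∀ l, 0 < l → φ' l = ∫ t in Ioi (0:ℝ), t * Real.exp (-(l * t)) * μ t)
    (a b : ℝ) (ha : 0 < a) (hab : a ≤ b) : φ' b ≤ φ' a := by
  rw [hφ' a ha, hφ' b (ha.trans_le hab)]
  refine setIntegral_mono_on (integ μ hμpos hμdec hμint b (ha.trans_le hab))
    (integ μ hμpos hμdec hμint a ha) measurableSet_Ioi ?_
  intro x hx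
  have hx : 0 < x := hx
  have := (hμpos x hx).le
  gcongr

lemma lemC (μ φ' : ℝ → ℝ)
    (hμpos : ∀ t, 0 < t → 0 < μ t)
    (hμdec : ∀ s t, 0 < s → s ≤ t → μ t ≤ μ s)
    (hμint : IntegrableOn (fun t => min 1 t * μ t) (Ioi 0))
    (hφ' : ∀ l, 0 < l → φ' l = ∫ t in Ioi (0:ℝ), t * Real.exp (-(l * t)) * μ t)
    (l x : ℝ) (hl : 0 < l) (hx : 0 < x) :
    φ' l ≤ Real.exp 1 * φ' (l * x) + μ ((l * x)⁻¹) / l ^ 2 := by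
  have hlx : 0 < l * x := by positivity
  have hg := Real.integral_rpow_mul_exp_neg_mul_Ioi (a := 2) (r := l) (by norm_num) hl
  have hG : ∫ t in Ioi (0:ℝ), t * Real.exp (-(l * t)) = 1 / l ^ 2 := by
    rw [show (1:ℝ) / l ^ 2 = (1 / l) ^ (2:ℝ) * Real.Gamma 2 by
      rw [Real.Gamma_two]; norm_num, ← hg]
    norm_num
  have hGI : IntegrableOn (fun t : ℝ => t * Real.exp (-(l * t))) (Ioi 0) := by
    by_contra h
    rw [integral_undef h] at hG
    have : 0 < 1 / l ^ 2 := by positivity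
    linarith
  have hI1 := integ μ hμpos hμdec hμint l hl
  have hI2 := integ μ hμpos hμdec hμint (l * x) hlx
  calc φ' l = ∫ t in Ioi (0:ℝ), t * Real.exp (-(l * t)) * μ t := hφ' l hl
    _ ≤ ∫ t in Ioi (0:ℝ), (Real.exp 1 * (t * Real.exp (-(l * x * t)) * μ t)
          + t * Real.exp (-(l * t)) * μ ((l * x)⁻¹)) := by
        refine setIntegral_mono_on hI1 ((hI2.const_mul _).add (hGI.mul_const _))
          measurableSet_Ioi ?_
        intro t ht
        have ht : 0 < t := ht
        have hp := hμpos t ht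
        have hq := hμpos (l * x)⁻¹ (by positivity)
        rcases le_total t (l * x)⁻¹ with h | h
        · have h1 : l * x * t ≤ 1 := by
            have := mul_le_mul_of_nonneg_left h hlx.le
            rwa [mul_inv_cancel₀ hlx.ne'] at this
          have h2 : Real.exp (-(l * t)) ≤ Real.exp 1 * Real.exp (-(l * x * t)) := by
            rw [← Real.exp_add]
            apply Real.exp_le_exp.2
            nlinarith [mul_pos hl ht]
          have h3 : 0 ≤ t * Real.exp (-(l * t)) * μ ((l * x)⁻¹) := by positivity
          have h4 : t * Real.exp (-(l * t)) * μ t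
              ≤ t * (Real.exp 1 * Real.exp (-(l * x * t))) * μ t := by gcongr
          linarith
        · have h1 := hμdec _ t (by positivity) h
          have h2 : t * Real.exp (-(l * t)) * μ t
              ≤ t * Real.exp (-(l * t)) * μ ((l * x)⁻¹) := by gcongr
          have h3 : 0 ≤ Real.exp 1 * (t * Real.exp (-(l * x * t)) * μ t) := by positivity
          linarith
    _ = _ := by
        rw [integral_add (hI2.const_mul _) (hGI.mul_const _), integral_const_mul,
          integral_mul_const, hG, hφ' _ hlx]
        ring

/-- pointwise upper bound for small times -/
lemma ptw (d : ℕ) (s t : ℝ) (ht : 0 < t) (hts : t ≤ s) :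
    t ^ (-(d:ℝ) / 2) * Real.exp (-(s / (4 * t))) * t⁻¹ ^ 2 ≤
      (4 ^ (d + 2) * (d + 2).factorial) * (s ^ (-(d:ℝ) / 2) * s⁻¹ ^ 2) := by
  have hs : 0 < s := ht.trans_le hts
  set u := s / t with hu
  have hu1 : 1 ≤ u := by rw [hu, le_div_iff₀ ht]; linarith
  have hu0 : 0 < u := by linarith
  have htu : t⁻¹ = u * s⁻¹ := by rw [hu]; field_simp
  have e1 : t ^ (-(d:ℝ) / 2) = u ^ ((d:ℝ) / 2) * s ^ (-(d:ℝ) / 2) := by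
    rw [neg_div, Real.rpow_neg ht.le, ← Real.inv_rpow ht.le, htu,
      Real.mul_rpow hu0.le (by positivity), Real.inv_rpow hs.le, ← Real.rpow_neg hs.le]
  have e2 : s / (4 * t) = u / 4 := by rw [hu]; field_simp
  have h1 : u ^ ((d:ℝ) / 2) ≤ u ^ d := by
    rw [← Real.rpow_natCast]
    apply Real.rpow_le_rpow_of_exponent_le hu1
    have : (0:ℝ) ≤ d := by positivity
    linarith
  have h2 := Real.pow_div_factorial_le_exp (u / 4) (by positivity) (d + 2)
  have h3 : u ^ (d + 2) * Real.exp (-(u / 4)) ≤ 4 ^ (d + 2) * (d + 2).factorial := by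
    rw [Real.exp_neg, ← div_eq_mul_inv, div_le_iff₀ (Real.exp_pos _)]
    rw [div_pow, div_div, div_le_iff₀ (by positivity)] at h2
    linarith
  rw [e1, e2, htu]
  calc u ^ ((d:ℝ) / 2) * s ^ (-(d:ℝ) / 2) * Real.exp (-(u / 4)) * (u * s⁻¹) ^ 2
      ≤ u ^ d * s ^ (-(d:ℝ) / 2) * Real.exp (-(u / 4)) * (u * s⁻¹) ^ 2 := by gcongr
    _ = (u ^ (d + 2) * Real.exp (-(u / 4))) * (s ^ (-(d:ℝ) / 2) * s⁻¹ ^ 2) := by ring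
    _ ≤ _ := by gcongr

/-- integrability and upper bound -/
lemma upper (d : ℕ) (hd : 3 ≤ d) (μ φ' : ℝ → ℝ)
    (hμpos : ∀ t, 0 < t → 0 < μ t)
    (hμdec : ∀ s t, 0 < s → s ≤ t → μ t ≤ μ s)
    (hμint : IntegrableOn (fun t => min 1 t * μ t) (Ioi 0))
    (hφ' : ∀ l, 0 < l → φ' l = ∫ t in Ioi (0:ℝ), t * Real.exp (-(l * t)) * μ t)
    (s : ℝ) (hs : 0 < s) :
    IntegrableOn (fun t => t ^ (-(d:ℝ) / 2) * Real.exp (-(s / (4 * t))) * μ t) (Ioi 0) ∧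
    ∫ t in Ioi (0:ℝ), t ^ (-(d:ℝ) / 2) * Real.exp (-(s / (4 * t))) * μ t ≤
      (4 * Real.exp 1 * (4 ^ (d + 2) * (d + 2).factorial + 1 / ((d:ℝ) / 2 - 1))) *
        (s ^ (-(d:ℝ) / 2) * s⁻¹ * φ' s⁻¹) := by
  have hd' : (3:ℝ) ≤ d := by exact_mod_cast hd
  have hμb : ∀ t, 0 < t → t ≤ s → μ t ≤ 4 * Real.exp 1 * t⁻¹ ^ 2 * φ' s⁻¹ := by
    intro t ht hts
    have h1 := lemA μ φ' hμpos hμdec hμint hφ' t ht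
    have h2 := lemB μ φ' hμpos hμdec hμint hφ' s⁻¹ t⁻¹ (by positivity) (by gcongr)
    have h3 := h1.trans h2
    calc μ t = 4 * Real.exp 1 * t⁻¹ ^ 2 * (t ^ 2 / 4 * Real.exp (-1) * μ t) := by
          rw [Real.exp_neg]; field_simp
      _ ≤ _ := by gcongr
  have hΨ : 0 ≤ φ' s⁻¹ := by
    have h1 := lemA μ φ' hμpos hμdec hμint hφ' s hs
    have := hμpos s hs
    exact le_trans (by positivity) h1
  set Ψ := φ' s⁻¹
  set f : ℝ → ℝ := fun t => t ^ (-(d:ℝ) / 2) * Real.exp (-(s / (4 * t))) * μ t with hf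
  have hfm : AEStronglyMeasurable f (volume.restrict (Ioi (0:ℝ))) := by
    refine AEStronglyMeasurable.mul ?_ (aemeas μ hμdec)
    exact (by fun_prop : Measurable
      fun t : ℝ => t ^ (-(d:ℝ) / 2) * Real.exp (-(s / (4 * t)))).aestronglyMeasurable
  have hf0 : ∀ t, 0 < t → 0 ≤ f t := fun t ht => by
    have := hμpos t ht
    simp only [hf]; positivity
  set M : ℝ := 4 ^ (d + 2) * (d + 2).factorial with hM
  set S := s ^ (-(d:ℝ) / 2) with hS
  have b1 : ∀ t ∈ Ioc 0 s, f t ≤ 4 * Real.exp 1 * M * (S * s⁻¹ ^ 2) * Ψ := by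
    intro t ht
    have ht0 := ht.1
    have h1 := ptw d s t ht.1 ht.2
    calc f t ≤ t ^ (-(d:ℝ) / 2) * Real.exp (-(s / (4 * t))) *
            (4 * Real.exp 1 * t⁻¹ ^ 2 * Ψ) := by
          simp only [hf]
          have := hμb t ht.1 ht.2
          gcongr
      _ = 4 * Real.exp 1 * (t ^ (-(d:ℝ) / 2) * Real.exp (-(s / (4 * t))) * t⁻¹ ^ 2) * Ψ := by
          ring
      _ ≤ 4 * Real.exp 1 * (M * (S * s⁻¹ ^ 2)) * Ψ := by gcongr
      _ = _ := by ring
  have b2 : ∀ t ∈ Ioi s, f t ≤ 4 * Real.exp 1 * s⁻¹ ^ 2 * Ψ * t ^ (-(d:ℝ) / 2) := by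
    intro t ht
    have hst : s < t := ht
    have ht0 : 0 < t := hs.trans hst
    have h1 : Real.exp (-(s / (4 * t))) ≤ 1 := by
      rw [Real.exp_le_one_iff]
      have : 0 < s / (4 * t) := by positivity
      linarith
    have h2 := (hμdec s t hs hst.le).trans (hμb s hs le_rfl)
    have h3 := (hμpos t ht0).le
    calc f t ≤ t ^ (-(d:ℝ) / 2) * 1 * (4 * Real.exp 1 * s⁻¹ ^ 2 * Ψ) := by
          simp only [hf]
          gcongr
      _ = _ := by ring
  have hlt : -(d:ℝ) / 2 < -1 := by linarith
  have hI2' : IntegrableOn (fun t : ℝ => 4 * Real.exp 1 * s⁻¹ ^ 2 * Ψ * t ^ (-(d:ℝ) / 2))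
      (Ioi s) := (integrableOn_Ioi_rpow_of_lt hlt hs).const_mul _
  have hI1' : IntegrableOn (fun _ : ℝ => 4 * Real.exp 1 * M * (S * s⁻¹ ^ 2) * Ψ) (Ioc 0 s) :=
    integrableOn_const (by simp)
  have hI1 : IntegrableOn f (Ioc 0 s) := by
    refine Integrable.mono' hI1' (hfm.mono_set Ioc_subset_Ioi_self) ?_
    filter_upwards [ae_restrict_mem measurableSet_Ioc] with t ht
    rw [Real.norm_of_nonneg (hf0 t ht.1)]
    exact b1 t ht
  have hI2 : IntegrableOn f (Ioi s) := by
    refine Integrable.mono' hI2' (hfm.mono_set (Ioi_subset_Ioi hs.le)) ?_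
    filter_upwards [ae_restrict_mem measurableSet_Ioi] with t ht
    rw [Real.norm_of_nonneg (hf0 t (hs.trans ht))]
    exact b2 t ht
  have hU : Ioc 0 s ∪ Ioi s = Ioi (0:ℝ) := Ioc_union_Ioi_eq_Ioi hs.le
  refine ⟨hU ▸ hI1.union hI2, ?_⟩
  rw [← hU, setIntegral_union Ioc_disjoint_Ioi_same measurableSet_Ioi hI1 hI2]
  have c1 : ∫ t in Ioc 0 s, f t ≤ s * (4 * Real.exp 1 * M * (S * s⁻¹ ^ 2) * Ψ) := by
    refine (setIntegral_mono_on hI1 hI1' measurableSet_Ioc b1).trans_eq ?_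
    rw [setIntegral_const]
    simp only [measureReal_def, Real.volume_Ioc, smul_eq_mul]
    rw [ENNReal.toReal_ofReal (by linarith)]; ring
  have c2 : ∫ t in Ioi s, f t ≤ 4 * Real.exp 1 * s⁻¹ ^ 2 * Ψ * (S * s / ((d:ℝ) / 2 - 1)) := by
    refine (setIntegral_mono_on hI2 hI2' measurableSet_Ioi b2).trans_eq ?_
    rw [integral_const_mul, integral_Ioi_rpow_of_lt hlt hs, Real.rpow_add_one hs.ne',
      ← neg_div_neg_eq, neg_neg]
    congr 2
    ring
  refine (add_le_add c1 c2).trans_eq ?_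
  field_simp

lemma lower (d : ℕ) (μ : ℝ → ℝ)
    (hμpos : ∀ t, 0 < t → 0 < μ t)
    (hμdec : ∀ s t, 0 < s → s ≤ t → μ t ≤ μ s)
    (s x : ℝ) (hs : 0 < s) (hx : 0 < x)
    (hI : IntegrableOn
      (fun t => t ^ (-(d:ℝ) / 2) * Real.exp (-(s / (4 * t))) * μ t) (Ioi 0)) :
    (x⁻¹ / 2 * x⁻¹ ^ (-(d:ℝ) / 2) * Real.exp (-(x / 2))) * (s ^ (-(d:ℝ) / 2) * s * μ (s * x⁻¹)) ≤
    ∫ t in Ioi (0:ℝ), t ^ (-(d:ℝ) / 2) * Real.exp (-(s / (4 * t))) * μ t := by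
  set b := s * x⁻¹ with hb
  have hb0 : 0 < b := by positivity
  have hsub : Ioc (b / 2) b ⊆ Ioi 0 := fun x hx => by
    have := hx.1; simp only [mem_Ioi]; linarith
  have hp := hμpos b hb0
  calc _ = ∫ t in Ioc (b / 2) b, (b ^ (-(d:ℝ) / 2) * Real.exp (-(x / 2)) * μ b) := by
        rw [setIntegral_const]
        simp only [measureReal_def, Real.volume_Ioc, smul_eq_mul]
        rw [ENNReal.toReal_ofReal (by linarith)]
        have : b ^ (-(d:ℝ) / 2) = s ^ (-(d:ℝ) / 2) * x⁻¹ ^ (-(d:ℝ) / 2) :=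
          Real.mul_rpow hs.le (by positivity)
        rw [this]
        have : b - b / 2 = s * x⁻¹ / 2 := by rw [hb]; ring
        rw [this]; ring
    _ ≤ ∫ t in Ioc (b / 2) b, t ^ (-(d:ℝ) / 2) * Real.exp (-(s / (4 * t))) * μ t := by
        refine setIntegral_mono_on (integrableOn_const (by simp)) (hI.mono_set hsub)
          measurableSet_Ioc ?_
        intro t ht
        have ht0 : 0 < t := hsub ht
        have h1 := hμdec t b ht0 ht.2
        have h2 : b ^ (-(d:ℝ) / 2) ≤ t ^ (-(d:ℝ) / 2) := by
          apply Real.rpow_le_rpow_of_nonpos ht0 ht.2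
          have : (0:ℝ) ≤ d := by positivity
          linarith
        have h3 : s / (4 * t) ≤ x / 2 := by
          rw [div_le_div_iff₀ (by positivity) (by norm_num)]
          have h4 : s = b * x := by rw [hb]; field_simp
          have := ht.1
          rw [h4]; nlinarith
        gcongr
    _ ≤ _ := by
        refine setIntegral_mono_set hI ?_ hsub.eventuallyLE
        filter_upwards [ae_restrict_mem measurableSet_Ioi] with x hx
        have hx : 0 < x := hx
        have := hμpos x hx
        simp only [Pi.zero_apply]; positivity

end SBM

/-- Under (A-1) with `α ∈ [0,2)`, the Lévy density of the subordinate Brownian motion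
satisfies `j(r) ≍ r^{-d-2} φ'(r⁻²)` as `r → 0+`. -/
theorem sbm_jump_asymp
    (d : ℕ) (hd : 3 ≤ d)
    (α : ℝ) (hα0 : 0 ≤ α) (hα2 : α < 2)
    (μ φ φ' : ℝ → ℝ)
    (hμpos : ∀ t, 0 < t → 0 < μ t)
    (hμdec : ∀ s t, 0 < s → s ≤ t → μ t ≤ μ s)
    (hμint : IntegrableOn (fun t => min 1 t * μ t) (Ioi 0))
    (hφ : ∀ l, 0 < l → φ l = ∫ t in Ioi (0:ℝ), (1 - Real.exp (-(l * t))) * μ t)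
    (hφ' : ∀ l, 0 < l → φ' l = ∫ t in Ioi (0:ℝ), t * Real.exp (-(l * t)) * μ t)
    (hA1 : ∀ x, 0 < x →
      Tendsto (fun l => φ' (l * x) / φ' l) atTop (𝓝 (x ^ (α / 2 - 1))))
    (j : ℝ → ℝ)
    (hj : ∀ r, 0 < r → j r =
      ∫ t in Ioi (0:ℝ), (4 * Real.pi * t) ^ (-(d:ℝ) / 2) * Real.exp (-(r ^ 2 / (4 * t))) * μ t) :
    ∃ c C r₀ : ℝ, 0 < c ∧ c ≤ C ∧ 0 < r₀ ∧ ∀ r, 0 < r → r < r₀ →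
      c * (r ^ (-(d:ℝ) - 2) * φ' (r ^ (-2 : ℝ))) ≤ j r ∧
      j r ≤ C * (r ^ (-(d:ℝ) - 2) * φ' (r ^ (-2 : ℝ))) := by
  have hd' : (3:ℝ) ≤ d := by exact_mod_cast hd
  have hposφ : ∀ l, 0 < l → 0 < φ' l := by
    intro l hl
    have h1 := SBM.lemA μ φ' hμpos hμdec hμint hφ' l⁻¹ (by positivity)
    have := hμpos l⁻¹ (by positivity)
    rw [inv_inv] at h1
    exact lt_of_lt_of_le (by positivity) h1
  -- choose the scale x
  obtain ⟨x, hx, hxs⟩ : ∃ x : ℝ, 0 < x ∧ x ^ (α / 2 - 1) < Real.exp (-1) / 2 := by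
    have h := tendsto_rpow_neg_atTop (y := 1 - α / 2) (by linarith)
    have h2 := h.eventually (gt_mem_nhds (show (0:ℝ) < Real.exp (-1) / 2 by positivity))
    obtain ⟨x, h3, h4⟩ := (h2.and (eventually_gt_atTop 0)).exists
    exact ⟨x, h4, by rwa [neg_sub] at h3⟩
  obtain ⟨L, hL⟩ := eventually_atTop.1 ((hA1 x hx).eventually (gt_mem_nhds hxs))
  set K : ℝ := (4 * Real.pi) ^ (-(d:ℝ) / 2) with hK
  have hπ := Real.pi_pos
  have hK0 : 0 < K := by positivity
  set c₁ : ℝ := K * ((x⁻¹ / 2 * x⁻¹ ^ (-(d:ℝ) / 2) * Real.exp (-(x / 2))) / 2) with hc₁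
  set C₁ : ℝ := K * (4 * Real.exp 1 * (4 ^ (d + 2) * (d + 2).factorial + 1 / ((d:ℝ) / 2 - 1)))
    with hC₁
  have hc0 : 0 < c₁ := by positivity
  set L' := max L 1 with hL'
  have hL'1 : 1 ≤ L' := le_max_right _ _
  refine ⟨c₁, max c₁ C₁, L'⁻¹, hc0, le_max_left _ _, by positivity, ?_⟩
  intro r hr hrL
  set s := r ^ 2 with hs
  have hs0 : 0 < s := by positivity
  have e1 : r ^ (-2 : ℝ) = s⁻¹ := by
    rw [Real.rpow_neg hr.le, hs]; norm_num
  have e2 : r ^ (-(d:ℝ) - 2) = s ^ (-(d:ℝ) / 2) * s⁻¹ := by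
    rw [hs, ← Real.rpow_natCast r 2, ← Real.rpow_mul hr.le, ← Real.rpow_neg hr.le,
      ← Real.rpow_add hr]
    congr 1
    push_cast; ring
  have e3 : j r = K * ∫ t in Ioi (0:ℝ),
      t ^ (-(d:ℝ) / 2) * Real.exp (-(s / (4 * t))) * μ t := by
    rw [hj r hr, ← integral_const_mul]
    refine setIntegral_congr_fun measurableSet_Ioi ?_
    intro t ht
    have ht : 0 < t := ht
    simp only
    rw [Real.mul_rpow (by positivity) ht.le]
    ring
  have hsL : L ≤ s⁻¹ := by
    have h1 : L' < r⁻¹ := by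
      rw [lt_inv_comm₀ (by positivity) hr]; exact hrL
    have h2 : r⁻¹ ≤ s⁻¹ := by
      rw [hs, ← inv_pow]
      nlinarith
    exact (le_max_left L 1).trans (h1.le.trans h2)
  obtain ⟨hI, hU⟩ := SBM.upper d hd μ φ' hμpos hμdec hμint hφ' s hs0
  have hlo := SBM.lower d μ hμpos hμdec s x hs0 hx hI
  have hsi : 0 < s⁻¹ := by positivity
  have hΨ := hposφ s⁻¹ hsi
  rw [e1, e2, e3]
  constructor
  · have h1 := SBM.lemC μ φ' hμpos hμdec hμint hφ' s⁻¹ x hsi hx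
    have h2 := hL s⁻¹ hsL
    rw [div_lt_iff₀ hΨ] at h2
    have h3 : Real.exp 1 * φ' (s⁻¹ * x) ≤ φ' s⁻¹ / 2 := by
      calc Real.exp 1 * φ' (s⁻¹ * x) ≤ Real.exp 1 * (Real.exp (-1) / 2 * φ' s⁻¹) := by gcongr
        _ = _ := by rw [Real.exp_neg]; field_simp
    have h4 : (s⁻¹ * x)⁻¹ = s * x⁻¹ := by rw [mul_inv, inv_inv]
    rw [h4] at h1
    have h5 : φ' s⁻¹ / 2 ≤ μ (s * x⁻¹) * s ^ 2 := by
      have : μ (s * x⁻¹) / s⁻¹ ^ 2 = μ (s * x⁻¹) * s ^ 2 := by field_simp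
      linarith
    set A := x⁻¹ / 2 * x⁻¹ ^ (-(d:ℝ) / 2) * Real.exp (-(x / 2)) with hA
    have hA0 : 0 < A := by positivity
    calc c₁ * (s ^ (-(d:ℝ) / 2) * s⁻¹ * φ' s⁻¹)
        = K * (A * (s ^ (-(d:ℝ) / 2) * s⁻¹ * (φ' s⁻¹ / 2))) := by rw [hc₁]; ring
      _ ≤ K * (A * (s ^ (-(d:ℝ) / 2) * s⁻¹ * (μ (s * x⁻¹) * s ^ 2))) := by gcongr
      _ = K * (A * (s ^ (-(d:ℝ) / 2) * s * μ (s * x⁻¹))) := by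
          field_simp
      _ ≤ _ := by gcongr
  · calc _ ≤ K * ((4 * Real.exp 1 * (4 ^ (d + 2) * (d + 2).factorial + 1 / ((d:ℝ) / 2 - 1))) *
          (s ^ (-(d:ℝ) / 2) * s⁻¹ * φ' s⁻¹)) := by gcongr
      _ = C₁ * (s ^ (-(d:ℝ) / 2) * s⁻¹ * φ' s⁻¹) := by rw [hC₁]; ring
      _ ≤ _ := by
        gcongr
        exact le_max_right _ _
end

section
/- Let d ≥ 3 be an integer and assume condition (A-1) holds with index α = 2, together with conditions (A-3) and (A-4). Then the Lévy density of the subordinate Brownian motion satisfies j(r) ≍ r^{−d−2} ( r² φ(r^{−2}) − φ'(r^{−2}) ) as r → 0+. -/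
open MeasureTheory Set Filter Topology

namespace SBM

noncomputable def w (s : ℝ) : ℝ := 1 - (1 + s) * Real.exp (-s)

noncomputable def ker (d : ℕ) (s : ℝ) : ℝ :=
  (4 * Real.pi * s) ^ (-(d:ℝ) / 2) * Real.exp (-(1 / (4 * s)))

lemma w_le_one {s : ℝ} (hs : 0 < s) : w s ≤ 1 := by
  unfold w
  have := Real.exp_pos (-s)
  nlinarith [mul_pos (by linarith : (0:ℝ) < 1 + s) this]

lemma w_le_sq {s : ℝ} (hs : 0 < s) : w s ≤ s ^ 2 := by
  unfold w
  have := Real.add_one_le_exp (-s)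
  nlinarith

lemma w_lower {s : ℝ} (hs : 0 < s) : s ^ 2 / 2 ≤ w s * (1 + s + s ^ 2 / 2) := by
  unfold w
  have h1 := Real.quadratic_le_exp_of_nonneg hs.le
  have h2 : Real.exp (-s) * Real.exp s = 1 := by rw [← Real.exp_add]; simp
  have h3 := Real.exp_pos (-s)
  have h4 : Real.exp (-s) * (1 + s + s ^ 2 / 2) ≤ 1 := by
    have h5 := mul_le_mul_of_nonneg_left h1 h3.le
    linarith
  nlinarith

lemma one_le_w {s : ℝ} (hs : 1 ≤ s) : 1 ≤ 5 * w s := by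
  have h := w_lower (by linarith : 0 < s)
  by_contra hc
  push Not at hc
  have : w s * (1 + s + s ^ 2 / 2) < 1 / 5 * (1 + s + s ^ 2 / 2) := by
    apply mul_lt_mul_of_pos_right (by linarith); positivity
  nlinarith

lemma sq_le_w {s : ℝ} (hs : 0 < s) (h1 : s ≤ 1) : s ^ 2 ≤ 5 * w s := by
  have h := w_lower hs
  by_contra hc
  push Not at hc
  have : w s * (1 + s + s ^ 2 / 2) < s ^ 2 / 5 * (1 + s + s ^ 2 / 2) := by
    apply mul_lt_mul_of_pos_right (by linarith); positivity
  have h3 : s ^ 2 / 5 * (1 + s + s ^ 2 / 2) ≤ s ^ 2 / 5 * (5 / 2) := by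
    gcongr; nlinarith
  nlinarith

lemma w_pos {s : ℝ} (hs : 0 < s) : 0 < w s := by
  rcases le_total s 1 with h | h
  · have := sq_le_w hs h
    have : 0 < s ^ 2 := by positivity
    linarith
  · have := one_le_w h
    linarith

lemma ker_pos (d : ℕ) {s : ℝ} (hs : 0 < s) : 0 < ker d s := by
  unfold ker; have := Real.pi_pos; positivity

lemma ker_le (d : ℕ) : ∃ C : ℝ, 0 < C ∧ ∀ s, 0 < s → ker d s ≤ C * w s := by
  have hpi := Real.pi_gt_three
  refine ⟨5 * ((d + 2).factorial * 4 ^ (d + 2) + 1), by positivity, fun s hs => ?_⟩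
  rcases le_total s 1 with h | h
  · have h1 : (4 * Real.pi * s) ^ (-(d:ℝ) / 2) ≤ s ^ (-(d:ℝ)) := by
      calc (4 * Real.pi * s) ^ (-(d:ℝ) / 2) ≤ s ^ (-(d:ℝ) / 2) := by
            apply Real.rpow_le_rpow_of_nonpos hs
            · nlinarith
            · have : (0:ℝ) ≤ d := by positivity
              linarith
        _ ≤ s ^ (-(d:ℝ)) := by
            apply Real.rpow_le_rpow_of_exponent_ge hs h
            have : (0:ℝ) ≤ d := by positivity
            linarith
    have h2 : Real.exp (-(1 / (4 * s))) ≤ (d + 2).factorial * (4 * s) ^ (d + 2) := by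
      have h3 := Real.pow_div_factorial_le_exp (1 / (4 * s)) (by positivity) (d + 2)
      rw [Real.exp_neg]
      have h4 : (0:ℝ) < (1 / (4 * s)) ^ (d + 2) / (d + 2).factorial := by positivity
      calc (Real.exp (1 / (4 * s)))⁻¹ ≤ ((1 / (4 * s)) ^ (d + 2) / (d + 2).factorial)⁻¹ := by
            gcongr
        _ = _ := by
            rw [inv_div, one_div, inv_pow, div_inv_eq_mul]
    have h5 : ker d s ≤ ((d + 2).factorial * 4 ^ (d + 2)) * s ^ 2 := by
      unfold ker
      calc _ ≤ s ^ (-(d:ℝ)) * ((d + 2).factorial * (4 * s) ^ (d + 2)) := by gcongr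
        _ = _ := by
          rw [Real.rpow_neg hs.le, Real.rpow_natCast, mul_pow, pow_add s]
          field_simp
    have h6 := sq_le_w hs h
    have h7 := w_pos hs
    have h8 : (0:ℝ) < (d + 2).factorial * 4 ^ (d + 2) := by positivity
    nlinarith
  · have h1 : ker d s ≤ 1 := by
      unfold ker
      have a1 : (4 * Real.pi * s) ^ (-(d:ℝ) / 2) ≤ 1 := by
        apply Real.rpow_le_one_of_one_le_of_nonpos
        · nlinarith
        · have : (0:ℝ) ≤ d := by positivity
          linarith
      have a2 : Real.exp (-(1 / (4 * s))) ≤ 1 := by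
        rw [Real.exp_le_one_iff]
        have : 0 < 1 / (4 * s) := by positivity
        linarith
      have := Real.exp_pos (-(1 / (4 * s)))
      calc _ ≤ 1 * 1 := by gcongr
        _ = (1:ℝ) := by norm_num
    have h2 := one_le_w h
    have h8 : (0:ℝ) < (d + 2).factorial * 4 ^ (d + 2) := by positivity
    nlinarith

lemma ker_lower (d : ℕ) {x : ℝ} (hx : 1 ≤ x) : ∃ c : ℝ, 0 < c ∧
    ∀ s, x⁻¹ ≤ s → s ≤ x → c ≤ ker d s := by
  have hpi := Real.pi_pos
  have hx0 : 0 < x := by linarith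
  refine ⟨(4 * Real.pi * x) ^ (-(d:ℝ) / 2) * Real.exp (-(x / 4)), by positivity,
    fun s h1 h2 => ?_⟩
  have hs : 0 < s := lt_of_lt_of_le (by positivity) h1
  unfold ker
  have a1 : (4 * Real.pi * x) ^ (-(d:ℝ) / 2) ≤ (4 * Real.pi * s) ^ (-(d:ℝ) / 2) := by
    apply Real.rpow_le_rpow_of_nonpos (by positivity) (by gcongr)
    have : (0:ℝ) ≤ d := by positivity
    linarith
  have a2 : Real.exp (-(x / 4)) ≤ Real.exp (-(1 / (4 * s))) := by
    rw [Real.exp_le_exp, neg_le_neg_iff, div_le_div_iff₀ (by positivity) (by positivity)]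
    have : 1 ≤ x * s := by
      calc 1 = x * x⁻¹ := by field_simp
        _ ≤ x * s := by gcongr
    linarith
  gcongr

lemma w_split (d : ℕ) {x : ℝ} (hx : 1 ≤ x) : ∃ c : ℝ, 0 < c ∧ ∀ s, 0 < s →
    w s ≤ 5 * (x ^ 2)⁻¹ * w (x * s) + 5 * w (x⁻¹ * s) + c * ker d s := by
  have hx0 : 0 < x := by linarith
  obtain ⟨c, hc, h⟩ := ker_lower d hx
  refine ⟨c⁻¹, by positivity, fun s hs => ?_⟩
  have p1 := w_pos (mul_pos hx0 hs)
  have p2 := w_pos (mul_pos (inv_pos.mpr hx0) hs)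
  have p3 := ker_pos d hs
  have q1 : 0 < 5 * (x ^ 2)⁻¹ * w (x * s) := by positivity
  have q3 : 0 < c⁻¹ * ker d s := by positivity
  rcases le_total x⁻¹ s with h1 | h1
  · rcases le_total s x with h2 | h2
    · have h3 := h s h1 h2
      have h4 : 1 ≤ c⁻¹ * ker d s := by
        calc 1 = c⁻¹ * c := by field_simp
          _ ≤ _ := by gcongr
      have := w_le_one hs
      linarith
    · have h3 : 1 ≤ x⁻¹ * s := by
        calc 1 = x⁻¹ * x := by field_simp
          _ ≤ _ := by gcongr
      have := one_le_w h3
      have := w_le_one hs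
      linarith
  · have h3 : x * s ≤ 1 := by
      calc x * s ≤ x * x⁻¹ := by gcongr
        _ = 1 := by field_simp
    have h4 := sq_le_w (mul_pos hx0 hs) h3
    have h5 := w_le_sq hs
    have h6 : s ^ 2 ≤ 5 * (x ^ 2)⁻¹ * w (x * s) := by
      calc s ^ 2 = (x ^ 2)⁻¹ * (x * s) ^ 2 := by field_simp
        _ ≤ (x ^ 2)⁻¹ * (5 * w (x * s)) := by gcongr
        _ = _ := by ring
    linarith

section
variable {μ : ℝ → ℝ}

lemma int_of_bd (hμpos : ∀ t, 0 < t → 0 < μ t)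
    (hμdec : ∀ s t, 0 < s → s ≤ t → μ t ≤ μ s)
    (hμint : IntegrableOn (fun t => min 1 t * μ t) (Ioi 0))
    (h : ℝ → ℝ) (hm : Measurable h) (C : ℝ) (hb : ∀ t, 0 < t → |h t| ≤ C * min 1 t) :
    IntegrableOn (fun t => h t * μ t) (Ioi 0) := by
  have hμm : AEMeasurable μ (volume.restrict (Ioi 0)) :=
    aemeasurable_restrict_of_antitoneOn measurableSet_Ioi
      (fun a ha b _ hab => hμdec a b ha hab)
  refine Integrable.mono' (hμint.const_mul C) (hm.aemeasurable.mul hμm).aestronglyMeasurable ?_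
  refine (ae_restrict_iff' measurableSet_Ioi).mpr (Eventually.of_forall fun t ht => ?_)
  have h1 := hμpos t ht
  rw [Real.norm_eq_abs, abs_mul, abs_of_pos h1, ← mul_assoc]
  exact mul_le_mul_of_nonneg_right (hb t ht) h1.le

lemma pos_int (hμpos : ∀ t, 0 < t → 0 < μ t) (h : ℝ → ℝ) (hp : ∀ t, 0 < t → 0 < h t)
    (hi : IntegrableOn (fun t => h t * μ t) (Ioi 0)) :
    0 < ∫ t in Ioi (0:ℝ), h t * μ t := by
  have hp' : ∀ t, 0 < t → 0 < h t * μ t := fun t ht => mul_pos (hp t ht) (hμpos t ht)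
  rw [setIntegral_pos_iff_support_of_nonneg_ae _ hi]
  · have : Function.support (fun t => h t * μ t) ∩ Ioi 0 = Ioi 0 := by
      apply inter_eq_right.mpr
      intro t ht
      exact (hp' t ht).ne'
    rw [this]; simp
  · exact (ae_restrict_iff' measurableSet_Ioi).mpr
      (Eventually.of_forall fun t ht => (hp' t ht).le)

lemma mono_int (hμpos : ∀ t, 0 < t → 0 < μ t) (h k : ℝ → ℝ) (hp : ∀ t, 0 < t → h t ≤ k t)
    (hi : IntegrableOn (fun t => h t * μ t) (Ioi 0))
    (ki : IntegrableOn (fun t => k t * μ t) (Ioi 0)) :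
    ∫ t in Ioi (0:ℝ), h t * μ t ≤ ∫ t in Ioi (0:ℝ), k t * μ t :=
  setIntegral_mono_on hi ki measurableSet_Ioi
    (fun t ht => mul_le_mul_of_nonneg_right (hp t ht) (hμpos t ht).le)

lemma bd_min {a l t : ℝ} (ht : 0 < t) (hl : 0 < l) (h1 : a ≤ 1) (h2 : a ≤ l * t) :
    a ≤ (1 + l) * min 1 t := by
  rcases le_total 1 t with h | h
  · rw [min_eq_left h]; linarith
  · rw [min_eq_right h]; nlinarith

lemma w_bd {l t : ℝ} (hl : 0 < l) (ht : 0 < t) : |w (l * t)| ≤ (1 + l) * min 1 t := by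
  have hlt := mul_pos hl ht
  rw [abs_of_pos (w_pos hlt)]
  refine bd_min ht hl (w_le_one hlt) ?_
  rcases le_total (l * t) 1 with h | h
  · have := w_le_sq hlt
    nlinarith
  · have := w_le_one hlt
    linarith

lemma e_bd {l t : ℝ} (hl : 0 < l) (ht : 0 < t) :
    |1 - Real.exp (-(l * t))| ≤ (1 + l) * min 1 t := by
  have hlt := mul_pos hl ht
  have h1 : Real.exp (-(l * t)) < 1 := by rw [Real.exp_lt_one_iff]; linarith
  have h2 := Real.exp_pos (-(l * t))
  have h3 := Real.add_one_le_exp (-(l * t))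
  rw [abs_of_pos (by linarith)]
  exact bd_min ht hl (by linarith) (by linarith)

lemma te_bd {l t : ℝ} (hl : 0 < l) (ht : 0 < t) :
    |t * Real.exp (-(l * t))| ≤ (1 + l⁻¹) * min 1 t := by
  have hlt := mul_pos hl ht
  have h1 : Real.exp (-(l * t)) < 1 := by rw [Real.exp_lt_one_iff]; linarith
  have h2 := Real.exp_pos (-(l * t))
  have h3 := Real.add_one_le_exp (l * t)
  have h4 : Real.exp (-(l * t)) * Real.exp (l * t) = 1 := by rw [← Real.exp_add]; simp
  rw [abs_of_pos (by positivity)]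
  have h5 : l * t * Real.exp (-(l * t)) ≤ 1 := by nlinarith
  have h6 : t * Real.exp (-(l * t)) ≤ l⁻¹ := by
    calc _ = l⁻¹ * (l * t * Real.exp (-(l * t))) := by field_simp
      _ ≤ l⁻¹ * 1 := by gcongr
      _ = _ := by ring
  have hl' : 0 < l⁻¹ := by positivity
  rcases le_total 1 t with h | h
  · rw [min_eq_left h]; linarith
  · rw [min_eq_right h]; nlinarith

lemma w_meas : Measurable w := by unfold w; fun_prop
lemma ker_meas (d : ℕ) : Measurable (ker d) := by unfold ker; fun_prop

lemma exp_diff_upper (a b t : ℝ) :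
    Real.exp (-(a * t)) - Real.exp (-(b * t)) ≤ (b - a) * (t * Real.exp (-(a * t))) := by
  have h1 := Real.add_one_le_exp (-((b - a) * t))
  have h2 : Real.exp (-(b * t)) = Real.exp (-(a * t)) * Real.exp (-((b - a) * t)) := by
    rw [← Real.exp_add]; congr 1; ring
  have h3 := Real.exp_pos (-(a * t))
  rw [h2]
  nlinarith

end

end SBM

/-- Under (A-1) with `α = 2`, (A-3) and (A-4), the Lévy density of the subordinate Brownian
motion satisfies `j(r) ≍ r^{-d-2} (r² φ(r⁻²) - φ'(r⁻²))` as `r → 0+`. -/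
theorem sbm_jump_asymp_alpha_two
    (d : ℕ) (hd : 3 ≤ d)
    (μ φ φ' : ℝ → ℝ)
    (hμpos : ∀ t, 0 < t → 0 < μ t)
    (hμdec : ∀ s t, 0 < s → s ≤ t → μ t ≤ μ s)
    (hμint : IntegrableOn (fun t => min 1 t * μ t) (Ioi 0))
    (hφ : ∀ l, 0 < l → φ l = ∫ t in Ioi (0:ℝ), (1 - Real.exp (-(l * t))) * μ t)
    (hφ' : ∀ l, 0 < l → φ' l = ∫ t in Ioi (0:ℝ), t * Real.exp (-(l * t)) * μ t)
    (hA1 : ∀ x, 0 < x →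
      Tendsto (fun l => φ' (l * x) / φ' l) atTop (𝓝 (1 : ℝ)))
    (u : ℝ → ℝ)
    (hupos : ∀ t, 0 < t → 0 < u t)
    (hudec : ∀ s t, 0 < s → s ≤ t → u t ≤ u s)
    (hu : ∀ l, 0 < l → ∫ t in Ioi (0:ℝ), Real.exp (-(l * t)) * u t = 1 / φ l)
    (ψ' : ℝ → ℝ)
    (hψ' : ∀ l, 0 < l → HasDerivAt (fun s => s / φ s) (ψ' l) l)
    (hA4 : ∀ x, 0 < x →
      Tendsto (fun l => ψ' (l * x) / ψ' l) atTop (𝓝 x⁻¹))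
    (j : ℝ → ℝ)
    (hj : ∀ r, 0 < r → j r =
      ∫ t in Ioi (0:ℝ), (4 * Real.pi * t) ^ (-(d:ℝ) / 2) * Real.exp (-(r ^ 2 / (4 * t))) * μ t) :
    ∃ c C r₀ : ℝ, 0 < c ∧ c ≤ C ∧ 0 < r₀ ∧ ∀ r, 0 < r → r < r₀ →
      c * (r ^ (-(d:ℝ) - 2) * (r ^ 2 * φ (r ^ (-2 : ℝ)) - φ' (r ^ (-2 : ℝ)))) ≤ j r ∧
      j r ≤ C * (r ^ (-(d:ℝ) - 2) * (r ^ 2 * φ (r ^ (-2 : ℝ)) - φ' (r ^ (-2 : ℝ)))) := by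
  classical
  have iE : ∀ l, 0 < l → IntegrableOn (fun t => (1 - Real.exp (-(l * t))) * μ t) (Ioi 0) :=
    fun l hl => SBM.int_of_bd hμpos hμdec hμint _ (by fun_prop) _ (fun t ht => SBM.e_bd hl ht)
  have iT : ∀ l, 0 < l → IntegrableOn (fun t => (t * Real.exp (-(l * t))) * μ t) (Ioi 0) :=
    fun l hl => SBM.int_of_bd hμpos hμdec hμint _ (by fun_prop) _ (fun t ht => SBM.te_bd hl ht)
  have iW : ∀ l, 0 < l → IntegrableOn (fun t => SBM.w (l * t) * μ t) (Ioi 0) :=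
    fun l hl => SBM.int_of_bd hμpos hμdec hμint (fun t => SBM.w (l * t))
      (SBM.w_meas.comp (by fun_prop)) _ (fun t ht => SBM.w_bd hl ht)
  have pφ : ∀ l, 0 < l → 0 < φ l := fun l hl => by
    rw [hφ l hl]
    refine SBM.pos_int hμpos _ (fun t ht => ?_) (iE l hl)
    have : Real.exp (-(l * t)) < 1 := by
      rw [Real.exp_lt_one_iff]; linarith [mul_pos hl ht]
    linarith
  have pφ' : ∀ l, 0 < l → 0 < φ' l := fun l hl => by
    rw [hφ' l hl]
    exact SBM.pos_int hμpos _ (fun t ht => by positivity) (iT l hl)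
  obtain ⟨g, hg⟩ : ∃ g : ℝ → ℝ, ∀ l, g l = ∫ t in Ioi (0:ℝ), SBM.w (l * t) * μ t :=
    ⟨_, fun _ => rfl⟩
  have pg : ∀ l, 0 < l → 0 < g l := fun l hl => by
    rw [hg l]
    exact SBM.pos_int hμpos _ (fun t ht => SBM.w_pos (mul_pos hl ht)) (iW l hl)
  have geq : ∀ l, 0 < l → g l = φ l - l * φ' l := fun l hl => by
    rw [hg, hφ l hl, hφ' l hl, ← integral_const_mul, ← integral_sub (iE l hl) ((iT l hl).const_mul l)]
    congr 1; ext t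
    unfold SBM.w; ring
  have conc : ∀ a b, 0 < a → 0 < b → φ b - φ a ≤ (b - a) * φ' a := fun a b ha hb => by
    rw [hφ a ha, hφ b hb, hφ' a ha, ← integral_const_mul, ← integral_sub (iE b hb) (iE a ha)]
    refine setIntegral_mono_on ((iE b hb).sub (iE a ha)) ((iT a ha).const_mul _)
      measurableSet_Ioi (fun t ht => ?_)
    have h1 := SBM.exp_diff_upper a b t
    have h2 := hμpos t ht
    nlinarith
  have dφ : ∀ l, 0 < l → HasDerivAt φ (φ' l) l := fun l hl => by
    have h1 := (hasDerivAt_id l).div (hψ' l hl) (div_pos hl (pφ l hl)).ne'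
    obtain ⟨D, hD⟩ : ∃ D, HasDerivAt φ D l := by
      refine ⟨_, h1.congr_of_eventuallyEq ?_⟩
      filter_upwards [lt_mem_nhds hl] with s hs
      have := pφ s hs
      simp only [Pi.div_apply, id]
      field_simp
    have h2 : HasDerivAt (fun s => φ s - φ' l * s) (D - φ' l * 1) l :=
      hD.sub ((hasDerivAt_id l).const_mul (φ' l))
    have h3 : IsLocalMax (fun s => φ s - φ' l * s) l := by
      filter_upwards [lt_mem_nhds hl] with s hs
      have := conc l s hl hs
      linarith
    have h4 := h3.hasDerivAt_eq_zero h2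
    have : D = φ' l := by linarith
    rwa [← this]
  have gψ : ∀ l, 0 < l → g l = ψ' l * φ l ^ 2 := fun l hl => by
    have h1 := (hasDerivAt_id l).div (dφ l hl) (pφ l hl).ne'
    have h2 := (hψ' l hl).unique h1
    have := pφ l hl
    rw [h2, geq l hl]
    simp only [id]
    field_simp
  have pψ : ∀ l, 0 < l → 0 < ψ' l := fun l hl => by
    have h1 := pg l hl
    rw [gψ l hl] at h1
    exact pos_of_mul_pos_left h1 (by positivity)
  have φle : ∀ l, 0 < l → l * φ' l ≤ φ l := fun l hl => by
    linarith [pg l hl, geq l hl]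
  have φmono : ∀ a b, 0 < a → a ≤ b → φ a ≤ φ b := fun a b ha hab => by
    have hb : 0 < b := by linarith
    have := conc b a hb ha
    nlinarith [pφ' b hb]
  have derivAnti : ∀ a b, 0 < a → a ≤ b → φ' b ≤ φ' a := fun a b ha hab => by
    have hb : 0 < b := by linarith
    rcases hab.eq_or_lt with h | h
    · rw [h]
    have h1 := conc b a hb ha
    have h2 := conc a b ha hb
    by_contra hc
    push Not at hc
    nlinarith [mul_pos (sub_pos.mpr h) (sub_pos.mpr hc)]
  have φscale : ∀ l x, 0 < l → 1 ≤ x → φ (l * x) ≤ x * φ l := fun l x hl hx => by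
    have h1 := conc l (l * x) hl (by positivity)
    have h2 := φle l hl
    nlinarith
  obtain ⟨K, L, hK, hL, hKL⟩ : ∃ K L : ℝ, 0 < K ∧ 0 < L ∧ ∀ l, L ≤ l → φ l ≤ K * (l * φ' l) := by
    have h1 := (hA1 (1/2) (by norm_num)).eventually (gt_mem_nhds (show (1:ℝ) < 3/2 by norm_num))
    obtain ⟨L0, hL0⟩ := eventually_atTop.mp h1
    obtain ⟨L, hL⟩ : ∃ L, L = max L0 1 := ⟨_, rfl⟩
    have hLp : 0 < L := by rw [hL]; positivity
    have hLL : L0 ≤ L := by rw [hL]; exact le_max_left _ _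
    have half : ∀ l, L ≤ l → φ' (l / 2) ≤ 3 / 2 * φ' l := fun l hl => by
      have hl0 : 0 < l := by linarith
      have := hL0 l (by linarith)
      rw [div_lt_iff₀ (pφ' l hl0)] at this
      rw [show l / 2 = l * (1 / 2) by ring]
      exact this.le
    have pL2 := pφ' (2 * L) (by positivity)
    have pL := pφ (2 * L) (by positivity)
    obtain ⟨K, hK⟩ : ∃ K, K = 3 + φ (2 * L) / (L * φ' (2 * L)) := ⟨_, rfl⟩
    have hK3 : 3 ≤ K := by
      rw [hK]
      have : 0 < φ (2 * L) / (L * φ' (2 * L)) := by positivity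
      linarith
    have key : ∀ n : ℕ, ∀ l, L ≤ l → l ≤ 2 ^ (n + 1) * L → φ l ≤ K * (l * φ' l) := by
      intro n
      induction n with
      | zero =>
        intro l h1 h2
        have hl0 : 0 < l := by linarith
        have h2' : l ≤ 2 * L := by simpa using h2
        calc φ l ≤ φ (2 * L) := φmono l _ hl0 h2'
          _ = φ (2 * L) / (L * φ' (2 * L)) * (L * φ' (2 * L)) := by field_simp
          _ ≤ K * (L * φ' (2 * L)) := by
              gcongr; rw [hK]; linarith
          _ ≤ K * (l * φ' l) := by
              have := derivAnti l _ hl0 h2'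
              gcongr
      | succ n ih =>
        intro l h1 h2
        have hl0 : 0 < l := by linarith
        rcases le_total l (2 * L) with h3 | h3
        · refine ih l h1 (h3.trans ?_)
          have : (1:ℝ) ≤ 2 ^ n := one_le_pow₀ (by norm_num)
          rw [pow_succ]; nlinarith
        · have h4 := ih (l / 2) (by linarith) (by rw [pow_succ] at h2; linarith)
          have h5 := half l h1
          have h6 := conc (l / 2) l (by linarith) hl0
          have h7 := pφ' l hl0
          have h8 : l * φ' (l / 2) ≤ l * (3 / 2 * φ' l) := by gcongr
          have h9 : K * (l / 2 * φ' (l / 2)) ≤ K * (l / 2 * (3 / 2 * φ' l)) := by gcongr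
          have h10 : 3 * (l * φ' l) ≤ K * (l * φ' l) := by gcongr
          nlinarith
    refine ⟨K, L, by linarith, hLp, fun l hl => ?_⟩
    obtain ⟨n, hn⟩ := pow_unbounded_of_one_lt (l / L) (show (1:ℝ) < 2 by norm_num)
    refine key n l hl ?_
    rw [div_lt_iff₀ hLp] at hn
    rw [pow_succ]
    linarith [show 0 < (2:ℝ) ^ n * L by positivity]
  obtain ⟨x, hx⟩ : ∃ x : ℝ, x = 2 * (10 + 5 * (32 * K ^ 2)) := ⟨_, rfl⟩
  have hx2 : 2 ≤ x := by rw [hx]; nlinarith [sq_nonneg K]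
  have hx0 : 0 < x := by linarith
  have hxi : 0 < x⁻¹ := by positivity
  have e1 := (hA4 x hx0).eventually (gt_mem_nhds (show x⁻¹ < 2 * x⁻¹ by linarith))
  have e2 := (hA4 x⁻¹ hxi).eventually (gt_mem_nhds (show x⁻¹⁻¹ < 2 * x by rw [inv_inv]; linarith))
  have e3 := (hA1 x⁻¹ hxi).eventually (gt_mem_nhds (show (1:ℝ) < 2 by norm_num))
  obtain ⟨M0, hM0⟩ := eventually_atTop.mp (e1.and (e2.and e3))
  obtain ⟨M, hM⟩ : ∃ M, M = max M0 (max 1 (L * x)) := ⟨_, rfl⟩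
  have hM1 : M0 ≤ M := by rw [hM]; exact le_max_left _ _
  have hM2 : 1 ≤ M := by rw [hM]; exact (le_max_left _ _).trans (le_max_right _ _)
  have hM3 : L * x ≤ M := by rw [hM]; exact (le_max_right _ _).trans (le_max_right _ _)
  have gup : ∀ l, M ≤ l → g (x * l) ≤ 2 * x * g l := fun l hl => by
    have hl0 : 0 < l := by linarith
    obtain ⟨h1, -, -⟩ := hM0 l (by linarith)
    rw [div_lt_iff₀ (pψ l hl0)] at h1
    have h2 := φscale l x hl0 (by linarith)
    have h3 := pφ (l * x) (by positivity)
    have h4 := pψ l hl0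
    rw [mul_comm x l, gψ _ (by positivity), gψ l hl0]
    calc ψ' (l * x) * φ (l * x) ^ 2 ≤ (2 * x⁻¹ * ψ' l) * (x * φ l) ^ 2 := by gcongr
      _ = _ := by field_simp
  have gdn : ∀ l, M ≤ l → g (x⁻¹ * l) ≤ 32 * K ^ 2 * x⁻¹ * g l := fun l hl => by
    have hl0 : 0 < l := by linarith
    obtain ⟨-, h1, h5⟩ := hM0 l (by linarith)
    rw [div_lt_iff₀ (pψ l hl0)] at h1
    rw [div_lt_iff₀ (pφ' l hl0)] at h5
    have ha : 0 < l * x⁻¹ := by positivity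
    have haL : L ≤ l * x⁻¹ := by
      rw [← div_eq_mul_inv, le_div_iff₀ hx0]; linarith
    have h2 := hKL _ haL
    have h3 := conc l (l * x⁻¹) hl0 ha
    have h4 := pψ l hl0
    have h6 := pφ _ ha
    have h7 : x⁻¹ ≤ 1 / 2 := by
      rw [one_div]; exact inv_anti₀ (by norm_num) hx2
    have h8 : l * φ' l ≤ 2 * φ l := by
      have h9 : x⁻¹ * (l * φ' l) ≤ 1 / 2 * (l * φ' l) := by
        have := pφ' l hl0
        gcongr
      nlinarith
    have h10 : φ (l * x⁻¹) ≤ 4 * K * x⁻¹ * φ l := by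
      calc φ (l * x⁻¹) ≤ K * (l * x⁻¹ * φ' (l * x⁻¹)) := h2
        _ ≤ K * (l * x⁻¹ * (2 * φ' l)) := by gcongr
        _ = 2 * K * x⁻¹ * (l * φ' l) := by ring
        _ ≤ 2 * K * x⁻¹ * (2 * φ l) := by gcongr
        _ = _ := by ring
    rw [mul_comm x⁻¹ l, gψ _ ha, gψ l hl0]
    calc ψ' (l * x⁻¹) * φ (l * x⁻¹) ^ 2 ≤ (2 * x * ψ' l) * (4 * K * x⁻¹ * φ l) ^ 2 := by gcongr
      _ = _ := by field_simp; ring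
  obtain ⟨C0, hC0, hker⟩ := SBM.ker_le d
  obtain ⟨c0, hc0, hsplit⟩ := SBM.w_split d (show 1 ≤ x by linarith)
  have iK : ∀ l, 0 < l → IntegrableOn (fun t => SBM.ker d (l * t) * μ t) (Ioi 0) :=
    fun l hl => SBM.int_of_bd hμpos hμdec hμint (fun t => SBM.ker d (l * t))
      ((SBM.ker_meas d).comp (by fun_prop)) (C0 * (1 + l)) (fun t ht => by
        have hlt := mul_pos hl ht
        rw [abs_of_pos (SBM.ker_pos d hlt), mul_assoc]
        have h1 := SBM.w_bd hl ht
        rw [abs_of_pos (SBM.w_pos hlt)] at h1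
        exact (hker _ hlt).trans (by gcongr))
  obtain ⟨J, hJ⟩ : ∃ J : ℝ → ℝ, ∀ l, J l = ∫ t in Ioi (0:ℝ), SBM.ker d (l * t) * μ t :=
    ⟨_, fun _ => rfl⟩
  have Jup : ∀ l, 0 < l → J l ≤ C0 * g l := fun l hl => by
    rw [hJ, hg, ← integral_const_mul]
    refine setIntegral_mono_on (iK l hl) ((iW l hl).const_mul _) measurableSet_Ioi (fun t ht => ?_)
    rw [← mul_assoc]
    exact mul_le_mul_of_nonneg_right (hker _ (mul_pos hl ht)) (hμpos t ht).le
  have Jdn0 : ∀ l, 0 < l →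
      g l ≤ 5 * (x ^ 2)⁻¹ * g (x * l) + 5 * g (x⁻¹ * l) + c0 * J l := fun l hl => by
    have i1 := (iW (x * l) (by positivity)).const_mul (5 * (x ^ 2)⁻¹)
    have i2 := (iW (x⁻¹ * l) (by positivity)).const_mul 5
    have i3 := (iK l hl).const_mul c0
    have i12 : Integrable (fun a => 5 * (x ^ 2)⁻¹ * (SBM.w (x * l * a) * μ a)
        + 5 * (SBM.w (x⁻¹ * l * a) * μ a)) (volume.restrict (Ioi 0)) := i1.add i2
    rw [hg, hg, hg, hJ, ← integral_const_mul, ← integral_const_mul, ← integral_const_mul,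
      ← integral_add i1 i2, ← integral_add i12 i3]
    refine setIntegral_mono_on (iW l hl) (i12.add i3) measurableSet_Ioi (fun t ht => ?_)
    have h1 := mul_le_mul_of_nonneg_right (hsplit _ (mul_pos hl ht)) (hμpos t ht).le
    refine h1.trans (le_of_eq ?_)
    simp only [mul_assoc, add_mul]
  have Jdn : ∀ l, M ≤ l → g l ≤ 2 * c0 * J l := fun l hl => by
    have hl0 : 0 < l := by linarith
    have h1 := Jdn0 l hl0
    have h2 : 5 * (x ^ 2)⁻¹ * g (x * l) ≤ 5 * (x ^ 2)⁻¹ * (2 * x * g l) := by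
      gcongr; exact gup l hl
    have h3 := gdn l hl
    have h4 : 5 * (x ^ 2)⁻¹ * (2 * x * g l) = 10 * x⁻¹ * g l := by field_simp; ring
    have h5 : (10 + 5 * (32 * K ^ 2)) * x⁻¹ = 1 / 2 := by
      have : 10 + 5 * (32 * K ^ 2) = x / 2 := by linarith
      rw [this]; field_simp
    have h6 : 10 * x⁻¹ * g l + 5 * (32 * K ^ 2 * x⁻¹ * g l) = 1 / 2 * g l := by
      rw [← h5]; ring
    linarith
  have jJ : ∀ r, 0 < r → j r = r ^ (-(d:ℝ)) * J (r ^ (-2:ℝ)) := fun r hr => by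
    rw [hj r hr, hJ, ← integral_const_mul]
    refine setIntegral_congr_fun measurableSet_Ioi (fun t ht => ?_)
    have ht0 : (0:ℝ) < t := ht
    have hpi := Real.pi_pos
    have hr2 : r ^ (-2:ℝ) = (r ^ 2)⁻¹ := by
      rw [Real.rpow_neg hr.le]; norm_num
    have h1 : (4 * Real.pi * t) ^ (-(d:ℝ) / 2)
        = r ^ (-(d:ℝ)) * (4 * Real.pi * ((r ^ 2)⁻¹ * t)) ^ (-(d:ℝ) / 2) := by
      have h2 : r ^ (-(d:ℝ)) = (r ^ 2) ^ (-(d:ℝ) / 2) := by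
        rw [← Real.rpow_natCast, ← Real.rpow_mul hr.le]; congr 1; push_cast; ring
      rw [h2, ← Real.mul_rpow (by positivity) (by positivity)]
      congr 1; field_simp
    have h3 : r ^ 2 / (4 * t) = 1 / (4 * ((r ^ 2)⁻¹ * t)) := by field_simp
    simp only [SBM.ker]
    rw [hr2, h1, h3]; ring
  have rhs : ∀ r, 0 < r → r ^ (-(d:ℝ) - 2) * (r ^ 2 * φ (r ^ (-2 : ℝ)) - φ' (r ^ (-2 : ℝ)))
      = r ^ (-(d:ℝ)) * g (r ^ (-2:ℝ)) := fun r hr => by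
    have hp : 0 < r ^ (-2:ℝ) := by positivity
    have hr2 : r ^ (-2:ℝ) = (r ^ 2)⁻¹ := by
      rw [Real.rpow_neg hr.le]; norm_num
    rw [geq _ hp, show -(d:ℝ) - 2 = -(d:ℝ) + (-2) by ring, Real.rpow_add hr, hr2]
    field_simp
  refine ⟨(2 * c0)⁻¹, max (2 * c0)⁻¹ C0, (Real.sqrt M)⁻¹, by positivity, le_max_left _ _,
    by positivity, fun r hr hr0 => ?_⟩
  have hp : 0 < r ^ (-2:ℝ) := by positivity
  have hr2 : r ^ (-2:ℝ) = (r ^ 2)⁻¹ := by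
    rw [Real.rpow_neg hr.le]; norm_num
  have hMl : M ≤ r ^ (-2:ℝ) := by
    rw [hr2]
    have hsq : 0 < Real.sqrt M := by positivity
    have h1 : r * Real.sqrt M < 1 := by
      have := mul_lt_mul_of_pos_right hr0 hsq
      rwa [inv_mul_cancel₀ hsq.ne'] at this
    have h2 : r ^ 2 * M ≤ 1 := by
      calc r ^ 2 * M = (r * Real.sqrt M) ^ 2 := by
            rw [mul_pow, Real.sq_sqrt (by linarith)]
        _ ≤ 1 := pow_le_one₀ (by positivity) h1.le
    rw [← one_div, le_div_iff₀ (by positivity)]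
    linarith
  have hrd : 0 < r ^ (-(d:ℝ)) := by positivity
  have hgp := pg _ hp
  rw [rhs r hr, jJ r hr]
  constructor
  · calc (2 * c0)⁻¹ * (r ^ (-(d:ℝ)) * g (r ^ (-2:ℝ)))
        ≤ (2 * c0)⁻¹ * (r ^ (-(d:ℝ)) * (2 * c0 * J (r ^ (-2:ℝ)))) := by
          gcongr; exact Jdn _ hMl
      _ = _ := by field_simp
  · calc r ^ (-(d:ℝ)) * J (r ^ (-2:ℝ)) ≤ r ^ (-(d:ℝ)) * (C0 * g (r ^ (-2:ℝ))) := by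
          gcongr; exact Jup _ hp
      _ = C0 * (r ^ (-(d:ℝ)) * g (r ^ (-2:ℝ))) := by ring
      _ ≤ _ := by gcongr; exact le_max_right _ _
end
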